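/- arXiv:1409.6433 — 4 statements merged into one kernel-verified Lean document; each statement's English description precedes it below -/
import Mathlib

section
/- Let d ≥ 2 and let B : ℝ^d → ℝ^{d×d} be a smooth map whose values are skew-symmetric matrices, satisfying the closedness condition ∂_j B_{kl}(x) + ∂_k B_{lj}(x) + ∂_l B_{jk}(x) = 0 for all indices j,k,l and all x ∈ ℝ^d, and assume B is not identically zero. Then there exists a constant c > 0 such that for every smooth A : ℝ^d → ℝ^d with ∂_j A_k − ∂_k A_j = B_{jk} on ℝ^d and every ψ ∈ C_c^∞(ℝ^d, ℂ), one has ∫_{ℝ^d} |∇ψ(x) − iA(x)ψ(x)|² dx − ((d−2)/2)² ∫_{ℝ^d} |ψ(x)|²/|x|² dx ≥ c ∫_{ℝ^d} |ψ(x)|²/(1 + |x|² (log|x|)²) dx. -/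
open MeasureTheory Real

/-- The magnetic energy density `|∇ψ(x) − iA(x)ψ(x)|²`. -/
noncomputable def magEnergy (d : ℕ)
    (A : EuclideanSpace ℝ (Fin d) → EuclideanSpace ℝ (Fin d))
    (ψ : EuclideanSpace ℝ (Fin d) → ℂ) (x : EuclideanSpace ℝ (Fin d)) : ℝ :=
  ∑ j, ‖fderiv ℝ ψ x (EuclideanSpace.single j (1:ℝ)) - Complex.I * (A x j : ℝ) * ψ x‖ ^ 2

/-- The weight `1 / ((2 + t) log² (2 + t))`, as a function of `t = |x|²`. -/
noncomputable def logWeight (t : ℝ) : ℝ := 1 / ((2 + t) * log (2 + t) ^ 2)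

theorem log_two_add_ge {t : ℝ} (ht : 0 ≤ t) : (1 / 2 : ℝ) < log (2 + t) := by
  have h1 : log 2 ≤ log (2 + t) := log_le_log (by norm_num) (by linarith)
  linarith [log_two_gt_d9]

theorem log_two_add_le {t : ℝ} (ht : 0 ≤ t) : log (2 + t) ≤ 2 + t := by
  linarith [log_le_sub_one_of_pos (show (0:ℝ) < 2 + t by linarith)]

theorem logWeight_pos {t : ℝ} (ht : 0 ≤ t) : 0 < logWeight t := by
  have := log_two_add_ge ht
  unfold logWeight
  positivity

theorem logWeight_le_two {t : ℝ} (ht : 0 ≤ t) : logWeight t ≤ 2 := by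
  have := log_two_add_ge ht
  unfold logWeight
  rw [div_le_iff₀ (by positivity)]
  nlinarith

theorem one_div_cube_le_logWeight {t : ℝ} (ht : 0 ≤ t) : 1 / (2 + t) ^ 3 ≤ logWeight t := by
  have h1 := log_two_add_ge ht
  have h2 := log_two_add_le ht
  unfold logWeight
  apply one_div_le_one_div_of_le (by positivity)
  calc (2 + t) * log (2 + t) ^ 2 ≤ (2 + t) * (2 + t) ^ 2 := by gcongr
    _ = (2 + t) ^ 3 := by ring

theorem inv_log_weight_le (r : ℝ) :
    1 / (1 + r ^ 2 * log r ^ 2) ≤ 32 * logWeight (r ^ 2) := by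
  have ht : 0 ≤ r ^ 2 := sq_nonneg r
  have h1 := log_two_add_ge ht
  unfold logWeight
  rw [mul_one_div, div_le_div_iff₀ (by positivity) (by positivity), one_mul]
  rcases le_total (r ^ 2) 2 with h | h
  · have h4 : log (2 + r ^ 2) ≤ 1.4 := by
      have : log (2 + r ^ 2) ≤ log (2 ^ 2) := log_le_log (by positivity) (by linarith)
      rw [log_pow] at this
      push_cast at this
      linarith [log_two_lt_d9]
    have h5 : log (2 + r ^ 2) ^ 2 ≤ 1.4 ^ 2 := by gcongr
    have h6 : 0 ≤ r ^ 2 * log r ^ 2 := by positivity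
    calc (2 + r ^ 2) * log (2 + r ^ 2) ^ 2 ≤ (2 + 2) * 1.4 ^ 2 := by gcongr
      _ ≤ 32 * (1 + r ^ 2 * log r ^ 2) := by nlinarith
  · have h4 : log (2 + r ^ 2) ≤ 4 * log r := by
      have : log (2 + r ^ 2) ≤ log (r ^ 4) := log_le_log (by positivity) (by nlinarith)
      rw [log_pow] at this
      exact_mod_cast this
    calc (2 + r ^ 2) * log (2 + r ^ 2) ^ 2 ≤ (r ^ 2 + r ^ 2) * (4 * log r) ^ 2 := by gcongr
      _ ≤ 32 * (1 + r ^ 2 * log r ^ 2) := by nlinarith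

theorem continuousOn_logWeight : ContinuousOn logWeight (Set.Ici 0) := by
  unfold logWeight
  intro t ht
  have ht : 0 ≤ t := ht
  have h1 := log_two_add_ge ht
  apply ContinuousAt.continuousWithinAt
  have : ContinuousAt (fun t : ℝ => log (2 + t)) t :=
    ContinuousAt.log (by fun_prop) (by linarith)
  exact ContinuousAt.div (by fun_prop) (by fun_prop) (by positivity)

theorem exists_radial_profile {t₁ t₂ : ℝ} (h₁ : 0 < t₁) (h₁₂ : t₁ < t₂) :
    ∃ n : ℝ → ℝ, ContDiff ℝ 1 n ∧ ∃ M > 0, ∃ C > 0, ∀ t, 0 ≤ t →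
      t * n t ^ 2 ≤ C * logWeight t ∧ n t ≤ C * (t * logWeight t) ∧
      (t ∉ Set.Icc t₁ t₂ → logWeight t ≤ -2 * (n t + t * deriv n t)) ∧
      logWeight t - M ≤ -2 * (n t + t * deriv n t) := by
  set σ : ℝ → ℝ := fun t => smoothTransition ((t - t₁) / (t₂ - t₁)) with hσ
  have hσ0 : ∀ t, t ≤ t₁ → σ t = 0 := fun t ht =>
    smoothTransition.zero_of_nonpos (div_nonpos_of_nonpos_of_nonneg (by linarith) (by linarith))
  have hσ1 : ∀ t, t₂ ≤ t → σ t = 1 := fun t ht =>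
    smoothTransition.one_of_one_le (by rw [le_div_iff₀ (by linarith)]; linarith)
  have hσc : ContDiff ℝ 1 σ := by
    apply smoothTransition.contDiff.comp
    fun_prop
  set n : ℝ → ℝ := fun t => σ t * (1 / (t * log (2 + t))) - (1 - σ t) with hn
  have hn0 : ∀ t, t ≤ t₁ → n t = -1 := fun t ht => by simp [hn, hσ0 t ht]
  have hn1 : ∀ t, t₂ ≤ t → n t = 1 / (t * log (2 + t)) := fun t ht => by simp [hn, hσ1 t ht]
  have hnc : ContDiff ℝ 1 n := by
    rw [contDiff_iff_contDiffAt]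
    intro t
    rcases lt_or_ge t t₁ with h | h
    · refine (contDiffAt_const (c := (-1 : ℝ))).congr_of_eventuallyEq ?_
      filter_upwards [Iio_mem_nhds h] with s hs using hn0 s hs.le
    · have ht : 0 < t := h₁.trans_le h
      have hl := log_two_add_ge ht.le
      have : ContDiffAt ℝ 1 (fun t : ℝ => log (2 + t)) t :=
        ContDiffAt.log (by fun_prop) (by linarith)
      have h3 : ContDiffAt ℝ 1 (fun t : ℝ => 1 / (t * log (2 + t))) t :=
        ContDiffAt.div (by fun_prop) (by fun_prop) (by positivity)
      exact (hσc.contDiffAt.mul h3).sub (contDiffAt_const.sub hσc.contDiffAt)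
  have hd0 : ∀ t, t < t₁ → deriv n t = 0 := fun t ht => by
    have : n =ᶠ[nhds t] fun _ => -1 := by
      filter_upwards [Iio_mem_nhds ht] with s hs using hn0 s hs.le
    rw [this.deriv_eq, deriv_const]
  have hd1 : ∀ t, t₂ < t → -2 * (n t + t * deriv n t) = 2 * logWeight t := fun t ht => by
    have : n =ᶠ[nhds t] fun t => 1 / (t * log (2 + t)) := by
      filter_upwards [Ioi_mem_nhds ht] with s hs using hn1 s hs.le
    have ht0 : 0 < t := by linarith
    have hl := log_two_add_ge ht0.le
    have hD : HasDerivAt (fun t : ℝ => 1 / (t * log (2 + t)))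
        ((0 * (t * log (2 + t)) - 1 * (1 * log (2 + t) + t * (1 / (2 + t)))) / (t * log (2 + t)) ^ 2) t := by
      refine HasDerivAt.div (hasDerivAt_const t 1) ?_ (by positivity)
      exact (hasDerivAt_id t).mul (((hasDerivAt_id t).const_add 2).log (by simp; linarith))
    rw [this.deriv_eq, hD.deriv, hn1 t ht.le, logWeight]
    have h2 : 2 + t ≠ 0 := by linarith
    have h3 : log (2 + t) ≠ 0 := by linarith
    field_simp
    ring
  have hcont : Continuous fun t => -2 * (n t + t * deriv n t) := by
    have := hnc.continuous_deriv le_rfl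
    have := hnc.continuous
    fun_prop
  obtain ⟨M, hM⟩ := (isCompact_Icc (a := t₁) (b := t₂)).exists_bound_of_continuousOn
    hcont.continuousOn
  obtain ⟨N, hN⟩ := (isCompact_Icc (a := (0:ℝ)) (b := t₂)).exists_bound_of_continuousOn
    (f := fun t => t * n t ^ 2) (by have := hnc.continuous; fun_prop)
  have hM0 : 0 ≤ M := (norm_nonneg _).trans (hM t₁ ⟨le_rfl, h₁₂.le⟩)
  have hN0 : 0 ≤ N := (norm_nonneg _).trans (hN 0 ⟨le_rfl, by linarith⟩)
  set K := (2 + t₁) / t₁ with hK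
  have hK0 : 0 < K := by positivity
  have ht2 : 0 < 2 + t₂ := by linarith
  have hKt : ∀ t, t₁ ≤ t → 2 + t ≤ K * t := fun t ht => by
    rw [hK, div_mul_eq_mul_div, le_div_iff₀ h₁]; nlinarith
  refine ⟨n, hnc, M + 2, by positivity, K ^ 2 + K + N * (2 + t₂) ^ 3, by positivity, ?_⟩
  intro t ht
  have hw := logWeight_pos ht
  have hw2 := logWeight_le_two ht
  have hl := log_two_add_ge ht
  have hl' := log_two_add_le ht
  have hout : t ∉ Set.Icc t₁ t₂ → logWeight t ≤ -2 * (n t + t * deriv n t) := by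
    intro h
    rcases lt_or_ge t t₁ with h' | h'
    · rw [hn0 t h'.le, hd0 t h']; linarith
    · rw [hd1 t (not_le.1 fun h'' => h ⟨h', h''⟩)]; linarith
  refine ⟨?_, ?_, hout, ?_⟩
  · rcases le_or_gt t t₂ with h | h
    · have h1 : t * n t ^ 2 ≤ N := (le_abs_self _).trans (hN t ⟨ht, h⟩)
      have h2 := one_div_cube_le_logWeight ht
      have h3 : 1 ≤ (2 + t₂) ^ 3 * logWeight t := by
        rw [div_le_iff₀ (by positivity)] at h2
        have : (2 + t) ^ 3 ≤ (2 + t₂) ^ 3 := by gcongr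
        nlinarith
      have h4 : 0 ≤ (K ^ 2 + K) * logWeight t := by positivity
      nlinarith
    · have h1 : t * n t ^ 2 ≤ K * logWeight t := by
        have ht0 : 0 < t := by linarith
        rw [hn1 t h.le, logWeight]
        have h5 := hKt t (by linarith)
        rw [show t * (1 / (t * log (2 + t))) ^ 2 = 1 / (t * log (2 + t) ^ 2) by field_simp,
          mul_one_div, div_le_div_iff₀ (by positivity) (by positivity), one_mul]
        calc (2 + t) * log (2 + t) ^ 2 ≤ K * t * log (2 + t) ^ 2 := by gcongr
          _ = _ := by ring
      have h4 : 0 ≤ (K ^ 2 + N * (2 + t₂) ^ 3) * logWeight t := by positivity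
      linarith
  · rcases lt_or_ge t t₁ with h | h
    · rw [hn0 t h.le]
      have : 0 ≤ (K ^ 2 + K + N * (2 + t₂) ^ 3) * (t * logWeight t) := by positivity
      linarith
    · have ht0 : 0 < t := by linarith
      have h0 : 0 ≤ σ t := smoothTransition.nonneg _
      have h1 : σ t ≤ 1 := smoothTransition.le_one _
      have h2 : n t ≤ 1 / (t * log (2 + t)) := by
        have : 0 ≤ 1 / (t * log (2 + t)) := by positivity
        simp only [hn]
        nlinarith
      have h3 : 1 / (t * log (2 + t)) ≤ K ^ 2 * (t * logWeight t) := by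
        rw [logWeight, show K ^ 2 * (t * (1 / ((2 + t) * log (2 + t) ^ 2))) =
          (K ^ 2 * t) / ((2 + t) * log (2 + t) ^ 2) by ring,
          div_le_div_iff₀ (by positivity) (by positivity), one_mul]
        have h5 := hKt t h
        calc (2 + t) * log (2 + t) ^ 2 = (2 + t) * log (2 + t) * log (2 + t) := by ring
          _ ≤ (K * t) * (K * t) * log (2 + t) := by
            gcongr
            linarith
          _ = _ := by ring
      have h4 : 0 ≤ (K + N * (2 + t₂) ^ 3) * (t * logWeight t) := by positivity
      linarith
  · by_cases h : t ∈ Set.Icc t₁ t₂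
    · have := neg_le_of_abs_le (hM t h)
      linarith
    · linarith [hout h]

/-- The `j`-th partial derivative of a real function. -/
noncomputable def partialDeriv {d : ℕ} (j : Fin d) (f : EuclideanSpace ℝ (Fin d) → ℝ)
    (x : EuclideanSpace ℝ (Fin d)) : ℝ :=
  fderiv ℝ f x (EuclideanSpace.single j (1 : ℝ))

theorem angular_lower_bound {P ρ D t y : ℝ} (hP : 0 < P) (hρ : 0 < ρ) (hρP : ρ ≤ P) (hD : 1 ≤ D)
    (ht : |t - P ^ 2| ≤ ρ ^ 2 / 4) (hyt : y ^ 2 ≤ t) (hout : ρ ^ 2 ≤ t - 2 * P * y + P ^ 2) :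
    P / 2 ≤ 8 * (D + 1) * P / ρ ^ 2 * (t - y ^ 2) - D * y := by
  obtain ⟨h1, h2⟩ := abs_le.1 ht
  have hρ2 : ρ ^ 2 ≤ P ^ 2 := by gcongr
  have hDP : 0 < D * P := by positivity
  set L := 8 * (D + 1) * P / ρ ^ 2 with hL
  have hL0 : 0 ≤ L := by positivity
  have hLρ : L * (ρ ^ 2 / 8) = (D + 1) * P := by rw [hL]; field_simp
  rcases le_total y (-(P / 2)) with h | h
  · have : 0 ≤ L * (t - y ^ 2) := mul_nonneg hL0 (by linarith)
    nlinarith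
  · have key : ρ ^ 2 / 8 ≤ t - y ^ 2 := by
      rcases le_total y 0 with h' | h'
      · nlinarith
      · nlinarith
    have h3 : (D + 1) * P ≤ L * (t - y ^ 2) := by
      rw [← hLρ]; exact mul_le_mul_of_nonneg_left key hL0
    have h4 : y ≤ P := by nlinarith
    nlinarith

theorem sum_partialDeriv_radial_add_angular {d : ℕ} {n χ : ℝ → ℝ} (hn : ContDiff ℝ 1 n)
    (hχ : ContDiff ℝ 1 χ) (K L : ℝ) {e : EuclideanSpace ℝ (Fin d)} (he : ‖e‖ = 1)
    {W : EuclideanSpace ℝ (Fin d) → EuclideanSpace ℝ (Fin d)}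
    (hW : W = fun x => n (‖x‖ ^ 2) • x - (K * χ (‖x‖ ^ 2) * exp (L * inner ℝ e x)) •
      (‖x‖ ^ 2 • e - (inner ℝ e x : ℝ) • x)) (x : EuclideanSpace ℝ (Fin d)) :
    ∑ j, partialDeriv j (fun y => W y j) x =
      d * n (‖x‖ ^ 2) + 2 * ‖x‖ ^ 2 * deriv n (‖x‖ ^ 2) -
        K * χ (‖x‖ ^ 2) * exp (L * inner ℝ e x) *
          (L * (‖x‖ ^ 2 - (inner ℝ e x) ^ 2) - (d - 1) * inner ℝ e x) := by
  have hterm : ∀ j, partialDeriv j (fun y => W y j) x =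
      n (‖x‖ ^ 2) + 2 * deriv n (‖x‖ ^ 2) * (x j * x j) -
      K * exp (L * inner ℝ e x) * (2 * deriv χ (‖x‖ ^ 2) *
          (‖x‖ ^ 2 * (e j * x j) - inner ℝ e x * (x j * x j)) +
        χ (‖x‖ ^ 2) * (L * (‖x‖ ^ 2 * (e j * e j) - inner ℝ e x * (e j * x j)) +
          (e j * x j) - inner ℝ e x)) := by
    intro j
    have hT : HasFDerivAt (fun x : EuclideanSpace ℝ (Fin d) => ‖x‖ ^ 2) (2 • innerSL ℝ x) x :=
      (hasStrictFDerivAt_norm_sq x).hasFDerivAt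
    have hY : HasFDerivAt (fun x : EuclideanSpace ℝ (Fin d) => (inner ℝ e x : ℝ)) (innerSL ℝ e) x :=
      (innerSL ℝ e).hasFDerivAt
    have hX : HasFDerivAt (fun x : EuclideanSpace ℝ (Fin d) => x j)
        (EuclideanSpace.proj j : EuclideanSpace ℝ (Fin d) →L[ℝ] ℝ) x :=
      (EuclideanSpace.proj j : EuclideanSpace ℝ (Fin d) →L[ℝ] ℝ).hasFDerivAt
    have hN := ((hn.differentiable one_ne_zero) (‖x‖ ^ 2)).hasDerivAt.comp_hasFDerivAt x hT
    have hC := ((hχ.differentiable one_ne_zero) (‖x‖ ^ 2)).hasDerivAt.comp_hasFDerivAt x hT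
    have hE := (hY.const_mul L).exp
    have hF := (hN.mul hX).sub (((hC.const_mul K).mul hE).mul
      ((hT.mul_const (e j)).sub (hY.mul hX)))
    have hfun : (fun y => W y j) = fun x => n (‖x‖ ^ 2) * x j -
        K * χ (‖x‖ ^ 2) * exp (L * inner ℝ e x) * (‖x‖ ^ 2 * e j - inner ℝ e x * x j) := by
      ext y; simp [hW]
    rw [hfun, partialDeriv]
    erw [hF.fderiv]
    simp [EuclideanSpace.inner_single_right]
    ring
  have hxx : ∑ j, x j * x j = ‖x‖ ^ 2 := by
    rw [EuclideanSpace.norm_sq_eq]; simp [sq]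
  have hee : ∑ j, e j * e j = 1 := by
    have : ∑ j, e j * e j = ‖e‖ ^ 2 := by rw [EuclideanSpace.norm_sq_eq]; simp [sq]
    rw [this, he, one_pow]
  have hex : ∑ j, e j * x j = inner ℝ e x := by
    simp [PiLp.inner_apply, mul_comm]
  simp only [hterm]
  simp only [Finset.sum_sub_distrib, Finset.sum_add_distrib, ← Finset.mul_sum, hxx, hee, hex]
  simp
  ring

set_option maxHeartbeats 800000 in
theorem exists_test_field {d : ℕ} (hd : 2 ≤ d) {p : EuclideanSpace ℝ (Fin d)} {ρ : ℝ}
    (hρ : 0 < ρ) (hρp : ρ ≤ ‖p‖) :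
    ∃ W : EuclideanSpace ℝ (Fin d) → EuclideanSpace ℝ (Fin d), ContDiff ℝ 1 W ∧
      ∃ C₁ > 0, ∃ C₂ > 0, ∃ ε₀ > 0, ∀ x,
        ‖W x‖ ^ 2 ≤ C₁ * logWeight (‖x‖ ^ 2) ∧ ∀ ε, 0 < ε → ε ≤ ε₀ →
        (x ∉ Metric.ball p ρ → logWeight (‖x‖ ^ 2) / 2 ≤
          -∑ j, partialDeriv j (fun y => W y j) x +
            (d - 2) * (inner ℝ x (W x) / (‖x‖ ^ 2 + ε))) ∧
        logWeight (‖x‖ ^ 2) / 2 - C₂ ≤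
          -∑ j, partialDeriv j (fun y => W y j) x +
            (d - 2) * (inner ℝ x (W x) / (‖x‖ ^ 2 + ε)) := by
  have hd' : (2 : ℝ) ≤ d := by exact_mod_cast hd
  set P := ‖p‖ with hPdef
  have hP : 0 < P := hρ.trans_le hρp
  have hρ2 : ρ ^ 2 ≤ P ^ 2 := by gcongr
  have hρ0 : 0 < ρ ^ 2 := by positivity
  obtain ⟨e, he, hpe⟩ : ∃ e : EuclideanSpace ℝ (Fin d), ‖e‖ = 1 ∧ p = P • e := by
    refine ⟨P⁻¹ • p, ?_, ?_⟩
    · rw [norm_smul, norm_inv, Real.norm_of_nonneg hP.le, ← hPdef, inv_mul_cancel₀ hP.ne']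
    · rw [smul_smul, mul_inv_cancel₀ hP.ne', one_smul]
  obtain ⟨n, hn, M, hM, C, hC, hprof⟩ := exists_radial_profile
    (t₁ := P ^ 2 - ρ ^ 2 / 8) (t₂ := P ^ 2 + ρ ^ 2 / 8) (by linarith) (by linarith)
  let χ : ContDiffBump (P ^ 2) := ⟨ρ ^ 2 / 8, ρ ^ 2 / 4, by linarith, by linarith⟩
  set L : ℝ := 8 * ((d - 1 : ℝ) + 1) * P / ρ ^ 2 with hL
  have hL0 : 0 ≤ L := by
    have : (0 : ℝ) ≤ (d - 1 : ℝ) + 1 := by linarith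
    positivity
  set K : ℝ := M * exp (L * (2 * P)) / (P / 2) with hK
  have hK0 : 0 < K := by positivity
  have hKM : K * exp (-(L * (2 * P))) * (P / 2) = M := by
    rw [hK, exp_neg]
    field_simp
  set W : EuclideanSpace ℝ (Fin d) → EuclideanSpace ℝ (Fin d) :=
    fun x => n (‖x‖ ^ 2) • x - (K * χ (‖x‖ ^ 2) * exp (L * inner ℝ e x)) •
      (‖x‖ ^ 2 • e - (inner ℝ e x : ℝ) • x) with hW
  have hχc : ContDiff ℝ 1 χ := χ.contDiff
  have hWc : ContDiff ℝ 1 W := by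
    have ht : ContDiff ℝ 1 (fun x : EuclideanSpace ℝ (Fin d) => ‖x‖ ^ 2) := contDiff_norm_sq ℝ
    have hy : ContDiff ℝ 1 (fun x : EuclideanSpace ℝ (Fin d) => (inner ℝ e x : ℝ)) :=
      (innerSL ℝ e).contDiff
    have h1 := hn.comp ht
    have h2 := hχc.comp ht
    exact (h1.smul contDiff_id).sub (((contDiff_const.mul h2).mul (contDiff_const.mul hy).exp).smul
      ((ht.smul contDiff_const).sub (hy.smul contDiff_id)))
  have hdiv := sum_partialDeriv_radial_add_angular hn hχc K L he hW
  have hinner : ∀ x, inner ℝ x (W x) = ‖x‖ ^ 2 * n (‖x‖ ^ 2) := by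
    intro x
    simp only [hW, inner_sub_right, inner_smul_right, real_inner_self_eq_norm_sq,
      real_inner_comm e x]
    ring
  set Z : ℝ := K * exp (L * (2 * P)) * (8 * P ^ 2) with hZ
  have hZ0 : 0 < Z := by positivity
  have hyt : ∀ x : EuclideanSpace ℝ (Fin d), (inner ℝ e x : ℝ) ^ 2 ≤ ‖x‖ ^ 2 := by
    intro x
    have := abs_real_inner_le_norm e x
    rw [he, one_mul] at this
    exact sq_le_sq' (neg_le_of_abs_le this) (le_of_abs_le this)
  have hsupp : ∀ x : EuclideanSpace ℝ (Fin d), χ (‖x‖ ^ 2) ≠ 0 → |‖x‖ ^ 2 - P ^ 2| ≤ ρ ^ 2 / 4 := by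
    intro x hx
    by_contra h
    apply hx
    apply χ.zero_of_le_dist
    rw [Real.dist_eq]
    exact (not_le.1 h).le
  have hx2P : ∀ x : EuclideanSpace ℝ (Fin d), |‖x‖ ^ 2 - P ^ 2| ≤ ρ ^ 2 / 4 → ‖x‖ ≤ 2 * P := by
    intro x hx
    refine (sq_le_sq₀ (norm_nonneg x) (by positivity)).1 ?_
    nlinarith [(abs_le.1 hx).2]
  have hy2P : ∀ x : EuclideanSpace ℝ (Fin d), |‖x‖ ^ 2 - P ^ 2| ≤ ρ ^ 2 / 4 →
      |(inner ℝ e x : ℝ)| ≤ 2 * P := by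
    intro x hx
    have := abs_real_inner_le_norm e x
    rw [he, one_mul] at this
    exact this.trans (hx2P x hx)
  have hCε : 0 < 1 / (2 * (d - 2 : ℝ) * C + 1) := by
    have : 0 ≤ (d - 2 : ℝ) := by linarith
    positivity
  refine ⟨W, hWc, 2 * C + 2 * (Z ^ 2 * (2 + 4 * P ^ 2) ^ 3), by positivity,
    M + K * exp (L * (2 * P)) * ((d - 1 : ℝ) * (2 * P)) , ?_, _, hCε, ?_⟩
  · have : 0 ≤ (d - 1 : ℝ) := by linarith
    positivity
  intro x
  set t := ‖x‖ ^ 2 with ht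
  set y : ℝ := inner ℝ e x with hy
  have ht0 : 0 ≤ t := sq_nonneg _
  have hw := logWeight_pos ht0
  obtain ⟨hp1, hp2, hp3, hp4⟩ := hprof t ht0
  have hχ0 : 0 ≤ χ t := χ.nonneg
  have hχ1 : χ t ≤ 1 := χ.le_one
  refine ⟨?_, ?_⟩
  · have hang : ‖(K * χ t * exp (L * y)) • (t • e - y • x)‖ ^ 2 ≤
        Z ^ 2 * (2 + 4 * P ^ 2) ^ 3 * logWeight t := by
      by_cases hx : χ t = 0
      · rw [hx]
        simp only [mul_zero, zero_mul, zero_smul, norm_zero]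
        norm_num
        positivity
      · have hs := hsupp x hx
        have hxP := hx2P x hs
        have hyP := hy2P x hs
        have htP : t ≤ 4 * P ^ 2 := by rw [ht]; nlinarith [norm_nonneg x]
        have hv : ‖t • e - y • x‖ ≤ 8 * P ^ 2 := by
          calc ‖t • e - y • x‖ ≤ ‖t • e‖ + ‖y • x‖ := norm_sub_le _ _
            _ = t + |y| * ‖x‖ := by
              rw [norm_smul t e, norm_smul y x, he, Real.norm_of_nonneg ht0, Real.norm_eq_abs, mul_one]
            _ ≤ 4 * P ^ 2 + (2 * P) * (2 * P) := by gcongr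
            _ = 8 * P ^ 2 := by ring
        have hZ1 : ‖(K * χ t * exp (L * y)) • (t • e - y • x)‖ ≤ Z := by
          rw [norm_smul, Real.norm_of_nonneg (by positivity), hZ]
          calc K * χ t * exp (L * y) * ‖t • e - y • x‖
              ≤ K * 1 * exp (L * (2 * P)) * (8 * P ^ 2) := by
                gcongr
                exact (le_abs_self _).trans hyP
            _ = _ := by ring
        have h1 : 1 ≤ (2 + 4 * P ^ 2) ^ 3 * logWeight t := by
          have h2 := one_div_cube_le_logWeight ht0
          rw [div_le_iff₀ (by positivity)] at h2
          have : (2 + t) ^ 3 ≤ (2 + 4 * P ^ 2) ^ 3 := by gcongr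
          nlinarith
        calc ‖(K * χ t * exp (L * y)) • (t • e - y • x)‖ ^ 2 ≤ Z ^ 2 * 1 := by
              rw [mul_one]; gcongr
          _ ≤ Z ^ 2 * ((2 + 4 * P ^ 2) ^ 3 * logWeight t) := by gcongr
          _ = _ := by ring
    have hrad : ‖n t • x‖ ^ 2 ≤ C * logWeight t := by
      rw [norm_smul, mul_pow, Real.norm_eq_abs, sq_abs, ← ht, mul_comm]
      exact hp1
    have hsub : ‖W x‖ ≤ ‖n t • x‖ + ‖(K * χ t * exp (L * y)) • (t • e - y • x)‖ :=
      norm_sub_le _ _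
    have hsq : ‖W x‖ ^ 2 ≤
        (‖n t • x‖ + ‖(K * χ t * exp (L * y)) • (t • e - y • x)‖) ^ 2 := by gcongr
    refine hsq.trans (add_sq_le.trans ?_)
    linarith
  · intro ε hε hε₀
    have hterm : (d - 2) * (n t * (ε / (t + ε))) ≤ logWeight t / 2 := by
      have h1 : 0 ≤ ε / (t + ε) := by positivity
      have h2 : n t * (ε / (t + ε)) ≤ C * (t * logWeight t) * (ε / (t + ε)) :=
        mul_le_mul_of_nonneg_right hp2 h1
      have h3 : C * (t * logWeight t) * (ε / (t + ε)) ≤ C * logWeight t * ε := by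
        rw [mul_div_assoc', div_le_iff₀ (by positivity)]
        have : 0 ≤ C * logWeight t * ε * ε := by positivity
        nlinarith
      have hd2 : 0 ≤ (d - 2 : ℝ) := by linarith
      have h4 : 2 * (d - 2 : ℝ) * C * ε ≤ 1 := by
        rw [le_div_iff₀ (by positivity)] at hε₀
        nlinarith
      calc (d - 2) * (n t * (ε / (t + ε))) ≤ (d - 2) * (C * logWeight t * ε) :=
            mul_le_mul_of_nonneg_left (h2.trans h3) hd2
        _ = (2 * (d - 2 : ℝ) * C * ε) * logWeight t / 2 := by ring
        _ ≤ 1 * logWeight t / 2 := by gcongr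
        _ = _ := by ring
    have heq : -∑ j, partialDeriv j (fun y => W y j) x + (d - 2) * (inner ℝ x (W x) / (t + ε)) =
        -2 * (n t + t * deriv n t) - (d - 2) * (n t * (ε / (t + ε))) +
          K * χ t * exp (L * y) * (L * (t - y ^ 2) - (d - 1) * y) := by
      rw [hdiv, hinner]
      have : t + ε ≠ 0 := by positivity
      field_simp
      ring
    rw [heq]
    have hlow : ∀ _ : |t - P ^ 2| ≤ ρ ^ 2 / 4, x ∉ Metric.ball p ρ →
        P / 2 ≤ L * (t - y ^ 2) - (d - 1) * y := by
      intro hs hx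
      apply angular_lower_bound hP hρ hρp (by linarith) hs (hyt x)
      rw [Metric.mem_ball, not_lt, dist_eq_norm] at hx
      have h1 : ‖x - p‖ ^ 2 = t - 2 * P * y + P ^ 2 := by
        rw [norm_sub_sq_real, ← hPdef, hpe, inner_smul_right, real_inner_comm]
        ring
      rw [← h1]
      gcongr
    constructor
    · intro hx
      by_cases hI : t ∈ Set.Icc (P ^ 2 - ρ ^ 2 / 8) (P ^ 2 + ρ ^ 2 / 8)
      · have habs : |t - P ^ 2| ≤ ρ ^ 2 / 8 := abs_le.2 ⟨by linarith [hI.1], by linarith [hI.2]⟩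
        have hs : |t - P ^ 2| ≤ ρ ^ 2 / 4 := by linarith
        have hone : χ t = 1 := by
          apply χ.one_of_mem_closedBall
          rw [Metric.mem_closedBall, Real.dist_eq]
          exact habs
        have hyP := neg_le_of_abs_le (hy2P x hs)
        have : M ≤ K * χ t * exp (L * y) * (L * (t - y ^ 2) - (d - 1) * y) := by
          rw [hone, ← hKM, mul_one]
          gcongr
          · nlinarith
          · exact hlow hs hx
        linarith
      · have h3 := hp3 hI
        have : 0 ≤ K * χ t * exp (L * y) * (L * (t - y ^ 2) - (d - 1) * y) := by
          by_cases hx0 : χ t = 0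
          · simp [hx0]
          · have := hlow (hsupp x hx0) hx
            have : 0 ≤ L * (t - y ^ 2) - (d - 1) * y := by linarith
            positivity
        linarith
    · have : -(K * exp (L * (2 * P)) * ((d - 1 : ℝ) * (2 * P))) ≤
          K * χ t * exp (L * y) * (L * (t - y ^ 2) - (d - 1) * y) := by
        have hd1 : 0 ≤ (d - 1 : ℝ) := by linarith
        by_cases hx0 : χ t = 0
        · rw [hx0]
          have : 0 ≤ K * exp (L * (2 * P)) * ((d - 1 : ℝ) * (2 * P)) := by positivity
          simpa using this
        · have hyP := hy2P x (hsupp x hx0)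
          have hb : -((d - 1) * (2 * P)) ≤ L * (t - y ^ 2) - (d - 1) * y := by
            have h1 : 0 ≤ L * (t - y ^ 2) := mul_nonneg hL0 (by linarith [hyt x])
            have h2 : (d - 1 : ℝ) * y ≤ (d - 1) * (2 * P) :=
              mul_le_mul_of_nonneg_left (le_of_abs_le hyP) hd1
            linarith
          have hc : K * χ t * exp (L * y) ≤ K * exp (L * (2 * P)) := by
            calc K * χ t * exp (L * y) ≤ K * 1 * exp (L * (2 * P)) := by
                  gcongr
                  exact le_of_abs_le hyP
              _ = _ := by ring
          have hc0 : 0 ≤ K * χ t * exp (L * y) := by positivity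
          have h5 : 0 ≤ (d - 1 : ℝ) * (2 * P) := by positivity
          nlinarith
      linarith

section PartialDeriv

variable {d : ℕ} {f g : EuclideanSpace ℝ (Fin d) → ℝ} {x : EuclideanSpace ℝ (Fin d)} {j k : Fin d}

theorem partialDeriv_mul (hf : DifferentiableAt ℝ f x) (hg : DifferentiableAt ℝ g x) :
    partialDeriv j (fun y => f y * g y) x =
      partialDeriv j f x * g x + f x * partialDeriv j g x := by
  rw [partialDeriv, fderiv_fun_mul hf hg]
  simp [partialDeriv]
  ring

theorem partialDeriv_add (hf : DifferentiableAt ℝ f x) (hg : DifferentiableAt ℝ g x) :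
    partialDeriv j (fun y => f y + g y) x = partialDeriv j f x + partialDeriv j g x := by
  rw [partialDeriv, fderiv_fun_add hf hg]
  simp [partialDeriv]

theorem partialDeriv_sub (hf : DifferentiableAt ℝ f x) (hg : DifferentiableAt ℝ g x) :
    partialDeriv j (fun y => f y - g y) x = partialDeriv j f x - partialDeriv j g x := by
  rw [partialDeriv, fderiv_fun_sub hf hg]
  simp [partialDeriv]

theorem contDiff_partialDeriv (hf : ContDiff ℝ (⊤ : ℕ∞) f) (j : Fin d) :
    ContDiff ℝ (⊤ : ℕ∞) (partialDeriv j f) :=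
  (hf.fderiv_right (m := (⊤ : ℕ∞)) (by simp)).clm_apply contDiff_const

theorem continuous_partialDeriv (hf : ContDiff ℝ 1 f) (j : Fin d) :
    Continuous (partialDeriv j f) :=
  (hf.continuous_fderiv one_ne_zero).clm_apply continuous_const

theorem hasCompactSupport_partialDeriv (hf : HasCompactSupport f) (j : Fin d) :
    HasCompactSupport (partialDeriv j f) :=
  hf.fderiv_apply (𝕜 := ℝ) _

theorem integrable_partialDeriv (hf : ContDiff ℝ 1 f) (hs : HasCompactSupport f) (j : Fin d) :
    Integrable (partialDeriv j f) :=
  (continuous_partialDeriv hf j).integrable_of_hasCompactSupport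
    (hasCompactSupport_partialDeriv hs j)

theorem integral_partialDeriv_eq_zero (hf : ContDiff ℝ 1 f) (hs : HasCompactSupport f)
    (j : Fin d) : ∫ x, partialDeriv j f x = 0 := by
  have h := integral_mul_fderiv_eq_neg_fderiv_mul_of_integrable
    (f := fun _ : EuclideanSpace ℝ (Fin d) => (1 : ℝ)) (g := f)
    (v := EuclideanSpace.single j (1 : ℝ)) (μ := volume) (by simp)
    (by simp only [one_mul]; exact integrable_partialDeriv hf hs j)
    (by simpa using hf.continuous.integrable_of_hasCompactSupport hs)
    (by fun_prop) (fun x _ => hf.differentiable one_ne_zero x)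
  simpa [partialDeriv] using h

theorem partialDeriv_comm (hf : ContDiff ℝ (⊤ : ℕ∞) f) :
    partialDeriv j (partialDeriv k f) x = partialDeriv k (partialDeriv j f) x := by
  have hd : DifferentiableAt ℝ (fderiv ℝ f) x :=
    (hf.fderiv_right (m := 1) (by norm_num; exact WithTop.coe_le_coe.2 le_top)).differentiable one_ne_zero x
  have hsymm : IsSymmSndFDerivAt ℝ f x := hf.contDiffAt.isSymmSndFDerivAt (by
    simp only [minSmoothness_of_isRCLikeNormedField]; exact WithTop.coe_le_coe.2 le_top)
  have key : ∀ v w, fderiv ℝ (fun y => fderiv ℝ f y v) x w = fderiv ℝ (fderiv ℝ f) x w v := by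
    intro v w
    rw [fderiv_clm_apply hd (differentiableAt_const v)]
    simp
  change fderiv ℝ (fun y => fderiv ℝ f y _) x _ = fderiv ℝ (fun y => fderiv ℝ f y _) x _
  rw [key, key]
  exact hsymm _ _

theorem sum_partialDeriv_id_div {ε : ℝ} (hε : 0 < ε) (x : EuclideanSpace ℝ (Fin d)) :
    ∑ j, partialDeriv j (fun y : EuclideanSpace ℝ (Fin d) => y j / (‖y‖ ^ 2 + ε)) x =
      d / (‖x‖ ^ 2 + ε) - 2 * ‖x‖ ^ 2 / (‖x‖ ^ 2 + ε) ^ 2 := by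
  have h0 : ‖x‖ ^ 2 + ε ≠ 0 := by positivity
  have hterm : ∀ j, partialDeriv j (fun y : EuclideanSpace ℝ (Fin d) => y j / (‖y‖ ^ 2 + ε)) x =
      1 / (‖x‖ ^ 2 + ε) - 2 / (‖x‖ ^ 2 + ε) ^ 2 * (x j * x j) := by
    intro j
    have hT : HasFDerivAt (fun x : EuclideanSpace ℝ (Fin d) => ‖x‖ ^ 2 + ε) (2 • innerSL ℝ x) x :=
      (hasStrictFDerivAt_norm_sq x).hasFDerivAt.add_const ε
    have hX : HasFDerivAt (fun x : EuclideanSpace ℝ (Fin d) => x j)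
        (EuclideanSpace.proj j : EuclideanSpace ℝ (Fin d) →L[ℝ] ℝ) x :=
      (EuclideanSpace.proj j : EuclideanSpace ℝ (Fin d) →L[ℝ] ℝ).hasFDerivAt
    have hF := hX.mul ((hasDerivAt_inv h0).comp_hasFDerivAt x hT)
    rw [partialDeriv]
    simp only [div_eq_mul_inv]
    erw [hF.fderiv]
    simp [EuclideanSpace.inner_single_right]
    ring
  have hxx : ∑ j, x j * x j = ‖x‖ ^ 2 := by
    rw [EuclideanSpace.norm_sq_eq]; simp [sq]
  simp only [hterm, Finset.sum_sub_distrib, ← Finset.mul_sum, hxx]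
  simp
  ring

end PartialDeriv

theorem magnetic_current_curl {d : ℕ} {A : EuclideanSpace ℝ (Fin d) → EuclideanSpace ℝ (Fin d)}
    {u v : EuclideanSpace ℝ (Fin d) → ℝ} (hA : ContDiff ℝ (⊤ : ℕ∞) A)
    (hu : ContDiff ℝ (⊤ : ℕ∞) u) (hv : ContDiff ℝ (⊤ : ℕ∞) v)
    {J : Fin d → EuclideanSpace ℝ (Fin d) → ℝ}
    (hJ : J = fun k x => u x * partialDeriv k v x - v x * partialDeriv k u x -
      A x k * (u x * u x + v x * v x)) (j k : Fin d) (x : EuclideanSpace ℝ (Fin d)) :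
    partialDeriv j (J k) x - partialDeriv k (J j) x =
      2 * ((partialDeriv j u x + A x j * v x) * (partialDeriv k v x - A x k * u x) -
        (partialDeriv j v x - A x j * u x) * (partialDeriv k u x + A x k * v x)) -
      (partialDeriv j (fun y => A y k) x - partialDeriv k (fun y => A y j) x) *
        (u x * u x + v x * v x) := by
  have one_ne : ((⊤ : ℕ∞) : WithTop ℕ∞) ≠ 0 := by simp
  have du := hu.differentiable one_ne
  have dv := hv.differentiable one_ne
  have dA : ∀ i, Differentiable ℝ (fun y => A y i) := fun i => by
    have := hA.differentiable one_ne
    fun_prop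
  have dpu := fun i => (contDiff_partialDeriv hu i).differentiable one_ne
  have dpv := fun i => (contDiff_partialDeriv hv i).differentiable one_ne
  have key : ∀ j k, partialDeriv j (J k) x =
      partialDeriv j u x * partialDeriv k v x + u x * partialDeriv j (partialDeriv k v) x -
      (partialDeriv j v x * partialDeriv k u x + v x * partialDeriv j (partialDeriv k u) x) -
      (partialDeriv j (fun y => A y k) x * (u x * u x + v x * v x) +
        A x k * (partialDeriv j u x * u x + u x * partialDeriv j u x +
          (partialDeriv j v x * v x + v x * partialDeriv j v x))) := by
    intro j k
    have h1 := (du x).fun_mul (dpv k x)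
    have h2 := (dv x).fun_mul (dpu k x)
    have h3 := (du x).fun_mul (du x)
    have h4 := (dv x).fun_mul (dv x)
    rw [hJ]
    simp only []
    rw [partialDeriv_sub (h1.fun_sub h2) ((dA k x).fun_mul (h3.fun_add h4)), partialDeriv_sub h1 h2,
      partialDeriv_mul (du x) (dpv k x), partialDeriv_mul (dv x) (dpu k x),
      partialDeriv_mul (dA k x) (h3.fun_add h4), partialDeriv_add h3 h4,
      partialDeriv_mul (du x) (du x), partialDeriv_mul (dv x) (dv x)]
  rw [key j k, key k j, partialDeriv_comm hu (j := j) (k := k), partialDeriv_comm hv (j := j) (k := k)]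
  ring

theorem sum_hardy_square_le {d : ℕ} (hd : 2 ≤ d) (a b x : Fin d → ℝ) (u v : ℝ) {κ t ε : ℝ}
    (hκ : κ = (d - 2 : ℝ) / 2) (ht : ∑ j, x j ^ 2 = t) (hε : 0 < ε) :
    ∑ j, ((a j + κ / (t + ε) * x j * u) ^ 2 + (b j + κ / (t + ε) * x j * v) ^ 2) ≤
      ∑ j, (a j ^ 2 + b j ^ 2) +
        κ * (∑ j, 2 * (u * a j + v * b j) * (x j / (t + ε)) +
          (u * u + v * v) * (d / (t + ε) - 2 * t / (t + ε) ^ 2)) -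
        κ ^ 2 * ((u * u + v * v) * (t / (t + ε) ^ 2)) := by
  have hd' : (2 : ℝ) ≤ d := by exact_mod_cast hd
  have hκ0 : 0 ≤ κ := by rw [hκ]; linarith
  have ht0 : 0 ≤ t := ht ▸ Finset.sum_nonneg fun j _ => sq_nonneg _
  have hdκ : (d : ℝ) = 2 * κ + 2 := by rw [hκ]; ring
  have h1 : ∑ j, ((a j + κ / (t + ε) * x j * u) ^ 2 + (b j + κ / (t + ε) * x j * v) ^ 2) =
      ∑ j, (a j ^ 2 + b j ^ 2) + κ * ∑ j, 2 * (u * a j + v * b j) * (x j / (t + ε)) +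
        (κ / (t + ε)) ^ 2 * (u * u + v * v) * t := by
    have h0 : (κ / (t + ε)) ^ 2 * (u * u + v * v) * t =
        ∑ j, (κ / (t + ε)) ^ 2 * (u * u + v * v) * x j ^ 2 := by rw [← Finset.mul_sum, ht]
    rw [h0, Finset.mul_sum, ← Finset.sum_add_distrib, ← Finset.sum_add_distrib]
    refine Finset.sum_congr rfl fun j _ => ?_
    ring
  have h2 : (κ / (t + ε)) ^ 2 * (u * u + v * v) * t +
      κ * d * ε / (t + ε) ^ 2 * (u * u + v * v) =
      κ * ((u * u + v * v) * (d / (t + ε) - 2 * t / (t + ε) ^ 2)) -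
        κ ^ 2 * ((u * u + v * v) * (t / (t + ε) ^ 2)) := by
    have : t + ε ≠ 0 := by positivity
    rw [hdκ]
    field_simp
    ring
  have h3 : 0 ≤ κ * d * ε / (t + ε) ^ 2 * (u * u + v * v) := by
    have : 0 ≤ u * u + v * v := add_nonneg (mul_self_nonneg u) (mul_self_nonneg v)
    positivity
  rw [h1]
  linarith

theorem two_mul_le_young {θ : ℝ} (hθ : 0 < θ) (a b : ℝ) : 2 * (a * b) ≤ θ * a ^ 2 + b ^ 2 / θ := by
  have h : θ * a ^ 2 + b ^ 2 / θ - 2 * (a * b) = (θ * a - b) ^ 2 / θ := by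
    field_simp
    ring
  have : 0 ≤ (θ * a - b) ^ 2 / θ := by positivity
  linarith

theorem field_energy_le {d : ℕ} (a b x W : Fin d → ℝ) (u v D q : ℝ) {θ : ℝ} (hθ : 0 < θ) :
    (u * u + v * v) * (-D + 2 * (q * ∑ j, x j * W j)) ≤
      -(∑ j, 2 * (u * a j + v * b j) * W j + (u * u + v * v) * D) +
        θ * ((u * u + v * v) * ∑ j, W j ^ 2) +
        (∑ j, ((a j + q * x j * u) ^ 2 + (b j + q * x j * v) ^ 2)) / θ := by
  have h : ∑ j, 2 * ((u * W j) * (a j + q * x j * u)) + ∑ j, 2 * ((v * W j) * (b j + q * x j * v)) ≤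
      θ * ((u * u + v * v) * ∑ j, W j ^ 2) +
        (∑ j, ((a j + q * x j * u) ^ 2 + (b j + q * x j * v) ^ 2)) / θ := by
    rw [Finset.mul_sum, Finset.mul_sum, Finset.sum_div, ← Finset.sum_add_distrib,
      ← Finset.sum_add_distrib]
    refine Finset.sum_le_sum fun j _ => ?_
    refine (add_le_add (two_mul_le_young hθ _ _) (two_mul_le_young hθ _ _)).trans_eq ?_
    ring
  have h2 : ∑ j, 2 * ((u * W j) * (a j + q * x j * u)) + ∑ j, 2 * ((v * W j) * (b j + q * x j * v)) =
      ∑ j, 2 * (u * a j + v * b j) * W j + (u * u + v * v) * (2 * (q * ∑ j, x j * W j)) := by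
    rw [Finset.mul_sum, Finset.mul_sum, Finset.mul_sum, ← Finset.sum_add_distrib,
      ← Finset.sum_add_distrib]
    refine Finset.sum_congr rfl fun j _ => ?_
    ring
  linarith

theorem curl_energy_le {d : ℕ} (a b x s : Fin d → ℝ) (j k : Fin d) (u v q β : ℝ) {η b₀ Λ θ : ℝ}
    (hη0 : 0 ≤ η) (hη1 : η ≤ 1) (hβ : b₀ * η ≤ η * β) (hθ : 0 < θ)
    (hs : ∀ i, (s i - 2 * η * q * x i) ^ 2 ≤ Λ) :
    b₀ * η * (u * u + v * v) ≤
      -(η * (2 * (a j * b k - b j * a k) - β * (u * u + v * v)) +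
        s j * (u * b k - v * a k) - s k * (u * b j - v * a j)) +
      (2 + 1 / θ) * (∑ j, ((a j + q * x j * u) ^ 2 + (b j + q * x j * v) ^ 2)) +
      θ * (Λ * (u * u + v * v)) := by
  set g : Fin d → ℝ := fun i => a i + q * x i * u with hg
  set h : Fin d → ℝ := fun i => b i + q * x i * v with hh
  set S := ∑ j, (g j ^ 2 + h j ^ 2) with hS
  change _ ≤ _ + (2 + 1 / θ) * S + _
  have hle : ∀ i, g i ^ 2 + h i ^ 2 ≤ S := fun i =>
    Finset.single_le_sum (f := fun i => g i ^ 2 + h i ^ 2) (fun i _ => by positivity)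
      (Finset.mem_univ i)
  have hid : η * (β * (u * u + v * v)) =
      -(η * (2 * (a j * b k - b j * a k) - β * (u * u + v * v)) +
        s j * (u * b k - v * a k) - s k * (u * b j - v * a j)) +
      η * (2 * (g j * h k - h j * g k)) +
      ((s j - 2 * η * q * x j) * (u * h k - v * g k) -
        (s k - 2 * η * q * x k) * (u * h j - v * g j)) := by
    simp only [hg, hh]
    ring
  have h1 : η * (2 * (g j * h k - h j * g k)) ≤ 2 * S := by
    have h2 : 2 * (g j * h k - h j * g k) ≤ 2 * S := by
      nlinarith [hle j, hle k, sq_nonneg (g j - h k), sq_nonneg (h j + g k)]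
    have hS0 : 0 ≤ 2 * S := by nlinarith [hle j, sq_nonneg (g j), sq_nonneg (h j)]
    nlinarith
  have hterm : ∀ i l, ∀ δ : ℝ, δ ^ 2 = (s i - 2 * η * q * x i) ^ 2 →
      2 * (δ * (u * h l - v * g l)) ≤ θ * (Λ * (u * u + v * v)) + 1 / θ * S := by
    intro i l δ hδ
    have y1 := two_mul_le_young hθ (δ * u) (h l)
    have y2 := two_mul_le_young hθ (-(δ * v)) (g l)
    have y3 : θ * (δ ^ 2 * (u * u + v * v)) ≤ θ * (Λ * (u * u + v * v)) := by
      rw [hδ]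
      have : 0 ≤ u * u + v * v := add_nonneg (mul_self_nonneg u) (mul_self_nonneg v)
      gcongr
      exact hs i
    have y4 : 1 / θ * (g l ^ 2 + h l ^ 2) ≤ 1 / θ * S := by
      gcongr
      exact hle l
    have y5 : h l ^ 2 / θ + g l ^ 2 / θ = 1 / θ * (g l ^ 2 + h l ^ 2) := by ring
    nlinarith
  have h3 := hterm j k (s j - 2 * η * q * x j) rfl
  have h4 := hterm k j (-(s k - 2 * η * q * x k)) (by ring)
  have h5 : b₀ * η * (u * u + v * v) ≤ η * (β * (u * u + v * v)) := by
    have : 0 ≤ u * u + v * v := add_nonneg (mul_self_nonneg u) (mul_self_nonneg v)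
    calc b₀ * η * (u * u + v * v) ≤ η * β * (u * u + v * v) := by gcongr
      _ = _ := by ring
  linarith

theorem exists_cutoff_bound {d : ℕ} {p : EuclideanSpace ℝ (Fin d)} {ρ κ : ℝ} (hκ : 0 ≤ κ)
    (hρ : 0 < ρ) (hρp : 4 * ρ ≤ ‖p‖) (η : ContDiffBump p) (hη : η.rOut = 2 * ρ) :
    ∃ Λ > 0, ∀ (ε : ℝ), 0 < ε → ∀ (x : EuclideanSpace ℝ (Fin d)) (i : Fin d),
      (partialDeriv i η x - 2 * η x * (κ / (‖x‖ ^ 2 + ε)) * x i) ^ 2 ≤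
        Λ * logWeight (‖x‖ ^ 2) := by
  set P := ‖p‖ with hPdef
  have hP : 0 < P := by linarith
  have hηc : ContDiff ℝ 1 η := η.contDiff
  obtain ⟨N, hN⟩ := (η.hasCompactSupport.fderiv ℝ).exists_bound_of_continuous
    (hηc.continuous_fderiv one_ne_zero)
  have hN0 : 0 ≤ N := (norm_nonneg _).trans (hN 0)
  refine ⟨(N + 4 * κ / P + 1) ^ 2 * (2 + 4 * P ^ 2) ^ 3, by positivity, ?_⟩
  intro ε hε x i
  have hw := logWeight_pos (sq_nonneg ‖x‖)
  by_cases hx : x ∈ Metric.closedBall p (2 * ρ)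
  · rw [Metric.mem_closedBall, dist_eq_norm] at hx
    have hx1 : ‖x‖ ≤ 2 * P := by
      have := norm_le_norm_add_norm_sub' x p
      linarith
    have hx2 : P / 2 ≤ ‖x‖ := by
      have := norm_le_norm_add_norm_sub' p x
      rw [norm_sub_rev] at this
      linarith
    have hx0 : 0 < ‖x‖ := by linarith
    have h1 : |partialDeriv i η x| ≤ N := by
      have := (fderiv ℝ η x).le_of_opNorm_le (hN x) (EuclideanSpace.single i (1 : ℝ))
      simpa [partialDeriv] using this
    have h2 : |2 * η x * (κ / (‖x‖ ^ 2 + ε)) * x i| ≤ 4 * κ / P := by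
      have hxi : |x i| ≤ ‖x‖ := by simpa using PiLp.norm_apply_le x i
      have hη1 := η.le_one (x := x)
      have hη0 := η.nonneg (x := x)
      rw [abs_mul, abs_of_nonneg (by positivity)]
      calc 2 * η x * (κ / (‖x‖ ^ 2 + ε)) * |x i|
          ≤ 2 * 1 * (κ / (‖x‖ ^ 2 + 0)) * ‖x‖ := by gcongr
        _ = 2 * κ / ‖x‖ := by field_simp; ring
        _ ≤ 2 * κ / (P / 2) := by gcongr
        _ = 4 * κ / P := by field_simp; ring
    have h3 : |partialDeriv i η x - 2 * η x * (κ / (‖x‖ ^ 2 + ε)) * x i| ≤ N + 4 * κ / P + 1 := by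
      have := abs_sub (partialDeriv i η x) (2 * η x * (κ / (‖x‖ ^ 2 + ε)) * x i)
      linarith
    have h4 : 1 ≤ (2 + 4 * P ^ 2) ^ 3 * logWeight (‖x‖ ^ 2) := by
      have h2 := one_div_cube_le_logWeight (sq_nonneg ‖x‖)
      rw [div_le_iff₀ (by positivity)] at h2
      have : (2 + ‖x‖ ^ 2) ^ 3 ≤ (2 + 4 * P ^ 2) ^ 3 := by
        gcongr
        nlinarith
      nlinarith
    calc (partialDeriv i η x - 2 * η x * (κ / (‖x‖ ^ 2 + ε)) * x i) ^ 2
        = |partialDeriv i η x - 2 * η x * (κ / (‖x‖ ^ 2 + ε)) * x i| ^ 2 := (sq_abs _).symm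
      _ ≤ (N + 4 * κ / P + 1) ^ 2 * 1 := by rw [mul_one]; gcongr
      _ ≤ (N + 4 * κ / P + 1) ^ 2 * ((2 + 4 * P ^ 2) ^ 3 * logWeight (‖x‖ ^ 2)) := by gcongr
      _ = _ := by ring
  · rw [← hη, ← η.tsupport_eq] at hx
    have h1 : η x = 0 := image_eq_zero_of_notMem_tsupport hx
    have h2 : fderiv ℝ η x = 0 := by
      by_contra h
      exact hx (support_fderiv_subset ℝ h)
    rw [partialDeriv, h1, h2]
    simp
    positivity

set_option maxHeartbeats 1000000 in
theorem exists_regularized_magnetic_hardy {d : ℕ} (hd : 2 ≤ d)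
    {β : EuclideanSpace ℝ (Fin d) → ℝ} (hβ : Continuous β) {p : EuclideanSpace ℝ (Fin d)}
    (hp : p ≠ 0) (hβp : 0 < β p) (j k : Fin d) :
    ∃ c > 0, ∃ ε₀ > 0, ∀ A : EuclideanSpace ℝ (Fin d) → EuclideanSpace ℝ (Fin d),
      ContDiff ℝ (⊤ : ℕ∞) A →
      (∀ x, partialDeriv j (fun y => A y k) x - partialDeriv k (fun y => A y j) x = β x) →
      ∀ u v : EuclideanSpace ℝ (Fin d) → ℝ, ContDiff ℝ (⊤ : ℕ∞) u → ContDiff ℝ (⊤ : ℕ∞) v →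
      HasCompactSupport u → HasCompactSupport v → ∀ ε, 0 < ε → ε ≤ ε₀ →
      c * ∫ x, (u x * u x + v x * v x) * logWeight (‖x‖ ^ 2) ≤
        (∫ x, ∑ i, ((partialDeriv i u x + A x i * v x) ^ 2 +
          (partialDeriv i v x - A x i * u x) ^ 2)) -
        ((d - 2 : ℝ) / 2) ^ 2 *
          ∫ x, (u x * u x + v x * v x) * (‖x‖ ^ 2 / (‖x‖ ^ 2 + ε) ^ 2) := by
  set κ : ℝ := (d - 2 : ℝ) / 2 with hκ
  have hκ0 : 0 ≤ κ := by
    have : (2 : ℝ) ≤ d := by exact_mod_cast hd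
    rw [hκ]; linarith
  have hP : 0 < ‖p‖ := norm_pos_iff.2 hp
  obtain ⟨r, hr, hball⟩ : ∃ r > 0, ∀ x ∈ Metric.ball p r, β p / 2 < β x :=
    Metric.eventually_nhds_iff_ball.1
      (hβ.continuousAt.eventually (lt_mem_nhds (by linarith : β p / 2 < β p)))
  set ρ : ℝ := min (r / 4) (‖p‖ / 4) with hρdef
  have hρ : 0 < ρ := by positivity
  have hρr : ρ ≤ r / 4 := min_le_left _ _
  have hρp : ρ ≤ ‖p‖ / 4 := min_le_right _ _
  let η : ContDiffBump p := ⟨ρ, 2 * ρ, hρ, by linarith⟩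
  obtain ⟨W, hWc, C₁, hC₁, C₂, hC₂, ε₀, hε₀, hW⟩ := exists_test_field hd hρ (by linarith : ρ ≤ ‖p‖)
  obtain ⟨Λ, hΛ, hcut⟩ := exists_cutoff_bound hκ0 hρ (by linarith) η rfl
  set b₀ : ℝ := β p / 2 with hb₀
  have hb₀pos : 0 < b₀ := by rw [hb₀]; linarith
  set θ₁ : ℝ := 1 / (8 * C₁) with hθ₁
  set θ₂ : ℝ := b₀ / (8 * C₂ * Λ) with hθ₂
  have hθ₁0 : 0 < θ₁ := by positivity
  have hθ₂0 : 0 < θ₂ := by positivity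
  set C₅ : ℝ := 1 / θ₁ + C₂ / b₀ * (2 + 1 / θ₂) with hC₅
  have hC₅0 : 0 < C₅ := by positivity
  refine ⟨1 / (4 * C₅), by positivity, ε₀, hε₀, ?_⟩
  intro A hA hcurl u v hu hv hus hvs ε hε hεε₀
  have top_ne : ((⊤ : ℕ∞) : WithTop ℕ∞) ≠ 0 := by simp
  have one_le : (1 : WithTop ℕ∞) ≤ ((⊤ : ℕ∞) : WithTop ℕ∞) := WithTop.coe_le_coe.2 le_top
  set f : EuclideanSpace ℝ (Fin d) → ℝ := fun x => u x * u x + v x * v x with hf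
  have hfc : ContDiff ℝ (⊤ : ℕ∞) f := (hu.mul hu).add (hv.mul hv)
  have hfs : HasCompactSupport f := hus.mul_right.add hvs.mul_right
  set J : Fin d → EuclideanSpace ℝ (Fin d) → ℝ := fun k x => u x * partialDeriv k v x -
    v x * partialDeriv k u x - A x k * (u x * u x + v x * v x) with hJ
  have hAc : ∀ i, ContDiff ℝ (⊤ : ℕ∞) (fun y => A y i) := fun i => by fun_prop
  have hJc : ∀ i, ContDiff ℝ (⊤ : ℕ∞) (J i) := fun i =>
    ((hu.mul (contDiff_partialDeriv hv i)).sub (hv.mul (contDiff_partialDeriv hu i))).sub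
      ((hAc i).mul hfc)
  have hηc : ContDiff ℝ (⊤ : ℕ∞) η := η.contDiff
  have hWj : ∀ i, ContDiff ℝ 1 (fun y => W y i) := fun i => by fun_prop
  have hXj : ∀ i, ContDiff ℝ 1
      (fun y : EuclideanSpace ℝ (Fin d) => y i / (‖y‖ ^ 2 + ε)) := fun i => by
    have ht : ContDiff ℝ 1 (fun x : EuclideanSpace ℝ (Fin d) => ‖x‖ ^ 2) := contDiff_norm_sq ℝ
    refine ContDiff.div (by fun_prop) (ht.add contDiff_const) fun x => by positivity
  set e₁ : EuclideanSpace ℝ (Fin d) → ℝ := fun x =>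
    ∑ i, partialDeriv i (fun y => f y * W y i) x with he₁
  set e₂ : EuclideanSpace ℝ (Fin d) → ℝ := fun x =>
    ∑ i, partialDeriv i (fun y => f y * (y i / (‖y‖ ^ 2 + ε))) x with he₂
  set e₃ : EuclideanSpace ℝ (Fin d) → ℝ := fun x =>
    partialDeriv j (fun y => η y * J k y) x - partialDeriv k (fun y => η y * J j y) x with he₃
  set G : EuclideanSpace ℝ (Fin d) → ℝ := fun x => ∑ i, ((partialDeriv i u x + A x i * v x) ^ 2 +
          (partialDeriv i v x - A x i * u x) ^ 2) with hG
  set H : EuclideanSpace ℝ (Fin d) → ℝ := fun x => f x * (‖x‖ ^ 2 / (‖x‖ ^ 2 + ε) ^ 2) with hH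
  have hfW : ∀ i, ContDiff ℝ 1 (fun y => f y * W y i) := fun i => (hfc.of_le one_le).mul (hWj i)
  have hfX : ∀ i, ContDiff ℝ 1 (fun y => f y * (y i / (‖y‖ ^ 2 + ε))) :=
    fun i => (hfc.of_le one_le).mul (hXj i)
  have hηJ : ∀ i, ContDiff ℝ 1 (fun y => η y * J i y) := fun i =>
    (hηc.mul (hJc i)).of_le one_le
  have hηJs : ∀ i, HasCompactSupport (fun y => η y * J i y) := fun i =>
    η.hasCompactSupport.mul_right
  have he₁i : Integrable e₁ := integrable_finsetSum _ fun i _ =>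
    integrable_partialDeriv (hfW i) hfs.mul_right i
  have he₂i : Integrable e₂ := integrable_finsetSum _ fun i _ =>
    integrable_partialDeriv (hfX i) hfs.mul_right i
  have he₃i : Integrable e₃ := (integrable_partialDeriv (hηJ k) (hηJs k) j).sub
    (integrable_partialDeriv (hηJ j) (hηJs j) k)
  have he₁0 : ∫ x, e₁ x = 0 := by
    rw [he₁, integral_finsetSum _ fun i _ => integrable_partialDeriv (hfW i) hfs.mul_right i]
    exact Finset.sum_eq_zero fun i _ => integral_partialDeriv_eq_zero (hfW i) hfs.mul_right i
  have he₂0 : ∫ x, e₂ x = 0 := by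
    rw [he₂, integral_finsetSum _ fun i _ => integrable_partialDeriv (hfX i) hfs.mul_right i]
    exact Finset.sum_eq_zero fun i _ => integral_partialDeriv_eq_zero (hfX i) hfs.mul_right i
  have he₃0 : ∫ x, e₃ x = 0 := by
    rw [he₃, integral_sub (integrable_partialDeriv (hηJ k) (hηJs k) j)
      (integrable_partialDeriv (hηJ j) (hηJs j) k), integral_partialDeriv_eq_zero (hηJ k) (hηJs k),
      integral_partialDeriv_eq_zero (hηJ j) (hηJs j), sub_zero]
  have hGi : Integrable G := by
    refine integrable_finsetSum _ fun i _ => ?_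
    have c1 := (contDiff_partialDeriv hu i).continuous
    have c2 := (contDiff_partialDeriv hv i).continuous
    have c3 := (hAc i).continuous
    have c4 := hu.continuous
    have c5 := hv.continuous
    have s1 : HasCompactSupport fun x => partialDeriv i u x + A x i * v x :=
      (hasCompactSupport_partialDeriv hus i).add hvs.mul_left
    have s2 : HasCompactSupport fun x => partialDeriv i v x - A x i * u x :=
      (hasCompactSupport_partialDeriv hvs i).sub hus.mul_left
    refine Continuous.integrable_of_hasCompactSupport (by fun_prop) ?_
    simp only [sq]
    exact s1.mul_right.add s2.mul_right
  have hHi : Integrable H := by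
    refine Continuous.integrable_of_hasCompactSupport (hfc.continuous.mul ?_) hfs.mul_right
    exact Continuous.div (by fun_prop) (by fun_prop) fun x => by positivity
  have hwi : Integrable fun x => f x * logWeight (‖x‖ ^ 2) := by
    refine Continuous.integrable_of_hasCompactSupport (hfc.continuous.mul ?_) hfs.mul_right
    exact continuousOn_logWeight.comp_continuous (by fun_prop) fun x => sq_nonneg ‖x‖
  have hpt : ∀ x, 1 / 4 * (f x * logWeight (‖x‖ ^ 2)) ≤
      -e₁ x - C₂ / b₀ * e₃ x + C₅ * (G x + κ * e₂ x - κ ^ 2 * H x) := by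
    intro x
    set w := logWeight (‖x‖ ^ 2) with hw
    set q := κ / (‖x‖ ^ 2 + ε) with hq
    have hw0 : 0 < w := logWeight_pos (sq_nonneg _)
    have hf0 : 0 ≤ f x := add_nonneg (mul_self_nonneg _) (mul_self_nonneg _)
    have du := hu.differentiable top_ne x
    have dv := hv.differentiable top_ne x
    have df := hfc.differentiable top_ne x
    set a : Fin d → ℝ := fun i => partialDeriv i u x + A x i * v x with ha
    set b : Fin d → ℝ := fun i => partialDeriv i v x - A x i * u x with hb
    set S := ∑ i, ((a i + q * x i * u x) ^ 2 + (b i + q * x i * v x) ^ 2) with hS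
    have hpf : ∀ i, partialDeriv i f x = 2 * (u x * a i + v x * b i) := by
      intro i
      rw [hf, partialDeriv_add (du.fun_mul du) (dv.fun_mul dv), partialDeriv_mul du du,
        partialDeriv_mul dv dv]
      simp only [ha, hb]
      ring
    have E₁ : e₁ x = ∑ i, 2 * (u x * a i + v x * b i) * W x i +
        f x * ∑ i, partialDeriv i (fun y => W y i) x := by
      rw [he₁, Finset.mul_sum, ← Finset.sum_add_distrib]
      refine Finset.sum_congr rfl fun i _ => ?_
      rw [partialDeriv_mul df ((hWj i).differentiable one_ne_zero x), hpf]
    have E₂ : e₂ x = ∑ i, 2 * (u x * a i + v x * b i) * (x i / (‖x‖ ^ 2 + ε)) +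
        f x * (d / (‖x‖ ^ 2 + ε) - 2 * ‖x‖ ^ 2 / (‖x‖ ^ 2 + ε) ^ 2) := by
      rw [he₂, ← sum_partialDeriv_id_div hε, Finset.mul_sum, ← Finset.sum_add_distrib]
      refine Finset.sum_congr rfl fun i _ => ?_
      rw [partialDeriv_mul df ((hXj i).differentiable one_ne_zero x), hpf]
    have E₃ : e₃ x = η x * (2 * (a j * b k - b j * a k) - β x * f x) +
        partialDeriv j η x * (u x * b k - v x * a k) -
        partialDeriv k η x * (u x * b j - v x * a j) := by
      have hc := magnetic_current_curl hA hu hv hJ j k x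
      rw [hcurl x] at hc
      have hJx : ∀ i, J i x = u x * b i - v x * a i := by
        intro i
        simp only [hJ, ha, hb]
        ring
      simp only [he₃]
      rw [partialDeriv_mul (hηc.differentiable top_ne x) ((hJc k).differentiable top_ne x),
        partialDeriv_mul (hηc.differentiable top_ne x) ((hJc j).differentiable top_ne x),
        hJx, hJx]
      linear_combination η x * hc
    have hnorm : ∑ i, x i ^ 2 = ‖x‖ ^ 2 := by
      rw [EuclideanSpace.norm_sq_eq]; simp
    have hSle : S ≤ G x + κ * e₂ x - κ ^ 2 * H x := by
      rw [E₂]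
      exact sum_hardy_square_le hd a b x (u x) (v x) hκ hnorm hε
    have hη0 : 0 ≤ η x := η.nonneg
    have hη1 : η x ≤ 1 := η.le_one
    obtain ⟨hWnorm, hWε⟩ := hW x
    obtain ⟨hWout, hWall⟩ := hWε ε hε hεε₀
    have hI : (d - 2) * (inner ℝ x (W x) / (‖x‖ ^ 2 + ε)) = 2 * (q * ∑ i, x i * W x i) := by
      have : inner ℝ x (W x) = ∑ i, x i * W x i := by simp [PiLp.inner_apply, mul_comm]
      rw [this, hq, hκ]
      ring
    have hfield : w / 2 ≤ C₂ * η x + (-∑ i, partialDeriv i (fun y => W y i) x +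
        2 * (q * ∑ i, x i * W x i)) := by
      rw [hI] at hWout hWall
      by_cases hx : x ∈ Metric.ball p ρ
      · have : η x = 1 := η.one_of_mem_closedBall (Metric.ball_subset_closedBall hx)
        rw [this]
        linarith
      · have := hWout hx
        have h2 : 0 ≤ C₂ * η x := by positivity
        linarith
    have hWsum : ∑ i, W x i ^ 2 ≤ C₁ * w := by
      have : ∑ i, W x i ^ 2 = ‖W x‖ ^ 2 := by rw [EuclideanSpace.norm_sq_eq]; simp
      rw [this]
      exact hWnorm
    have I₁ := field_energy_le a b x (W x) (u x) (v x)
      (∑ i, partialDeriv i (fun y => W y i) x) q hθ₁0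
    have hηβ : b₀ * η x ≤ η x * β x := by
      by_cases hx : x ∈ Metric.ball p (2 * ρ)
      · have := hball x (Metric.ball_subset_ball (by linarith) hx)
        nlinarith
      · have : η x = 0 := η.zero_of_le_dist (not_lt.1 hx)
        rw [this]
        simp
    have I₂ := curl_energy_le a b x (fun i => partialDeriv i η x) j k (u x) (v x) q (β x)
      hη0 hη1 hηβ hθ₂0 (hcut ε hε x)
    change f x * _ ≤ -(_ + f x * _) + θ₁ * (f x * _) + S / θ₁ at I₁
    change b₀ * η x * f x ≤ -(η x * (_ - β x * f x) + _ - _) + (2 + 1 / θ₂) * S +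
      θ₂ * (Λ * w * f x) at I₂
    rw [← E₁] at I₁
    rw [← E₃] at I₂
    have I₃ : θ₁ * (f x * ∑ i, W x i ^ 2) ≤ f x * w / 8 := by
      calc θ₁ * (f x * ∑ i, W x i ^ 2) ≤ θ₁ * (f x * (C₁ * w)) := by gcongr
        _ = f x * w / 8 := by rw [hθ₁]; field_simp
    have I₄ : C₂ * η x * f x ≤ -(C₂ / b₀ * e₃ x) + C₂ / b₀ * (2 + 1 / θ₂) * S + f x * w / 8 := by
      calc C₂ * η x * f x = C₂ / b₀ * (b₀ * η x * f x) := by field_simp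
        _ ≤ C₂ / b₀ * (-e₃ x + (2 + 1 / θ₂) * S + θ₂ * (Λ * w * f x)) := by gcongr
        _ = -(C₂ / b₀ * e₃ x) + C₂ / b₀ * (2 + 1 / θ₂) * S +
            (C₂ / b₀ * θ₂ * Λ) * (f x * w) := by ring
        _ = _ := by
          have : C₂ / b₀ * θ₂ * Λ = 1 / 8 := by rw [hθ₂]; field_simp
          rw [this]
          ring
    have I₅ := mul_le_mul_of_nonneg_left hfield hf0
    have I₆ : C₅ * S ≤ C₅ * (G x + κ * e₂ x - κ ^ 2 * H x) := by gcongr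
    have I₇ : C₅ * S = S / θ₁ + C₂ / b₀ * (2 + 1 / θ₂) * S := by rw [hC₅]; ring
    linarith
  have i₁ : Integrable fun x => -e₁ x - C₂ / b₀ * e₃ x := he₁i.neg.sub (he₃i.const_mul (C₂ / b₀))
  have i₀ : Integrable fun x => -e₁ x := he₁i.neg
  have i₂ : Integrable fun x => G x + κ * e₂ x := hGi.add (he₂i.const_mul κ)
  have i₃ : Integrable fun x => C₅ * (G x + κ * e₂ x - κ ^ 2 * H x) :=
    (i₂.sub (hHi.const_mul (κ ^ 2))).const_mul C₅
  have hint := integral_mono (hwi.const_mul (1 / 4)) (i₁.add i₃) hpt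
  have hrhs : ∫ x, (-e₁ x - C₂ / b₀ * e₃ x + C₅ * (G x + κ * e₂ x - κ ^ 2 * H x)) =
      C₅ * ((∫ x, G x) - κ ^ 2 * ∫ x, H x) := by
    rw [integral_add i₁ i₃, integral_sub i₀ (he₃i.const_mul (C₂ / b₀)),
      integral_const_mul, integral_const_mul, integral_sub i₂ (hHi.const_mul (κ ^ 2)),
      integral_add hGi (he₂i.const_mul κ), integral_const_mul, integral_const_mul,
      integral_neg, he₁0, he₂0, he₃0]
    ring
  simp only [Pi.add_apply] at hint
  rw [hrhs, integral_const_mul] at hint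
  have : 1 / (4 * C₅) * ∫ x, f x * logWeight (‖x‖ ^ 2) =
      (1 / 4 * ∫ x, f x * logWeight (‖x‖ ^ 2)) / C₅ := by
    field_simp
  rw [this, div_le_iff₀ hC₅0]
  linarith

theorem magEnergy_eq_sum_partialDeriv {d : ℕ}
    (A : EuclideanSpace ℝ (Fin d) → EuclideanSpace ℝ (Fin d))
    {ψ : EuclideanSpace ℝ (Fin d) → ℂ} {x : EuclideanSpace ℝ (Fin d)}
    (hψ : DifferentiableAt ℝ ψ x) :
    magEnergy d A ψ x =
      ∑ i, ((partialDeriv i (fun y => (ψ y).re) x + A x i * (ψ x).im) ^ 2 +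
        (partialDeriv i (fun y => (ψ y).im) x - A x i * (ψ x).re) ^ 2) := by
  refine Finset.sum_congr rfl fun i _ => ?_
  have hre : partialDeriv i (fun y => (ψ y).re) x =
      (fderiv ℝ ψ x (EuclideanSpace.single i (1 : ℝ))).re := by
    have := Complex.reCLM.hasFDerivAt.comp x hψ.hasFDerivAt
    rw [partialDeriv]
    erw [this.fderiv]
    simp
  have him : partialDeriv i (fun y => (ψ y).im) x =
      (fderiv ℝ ψ x (EuclideanSpace.single i (1 : ℝ))).im := by
    have := Complex.imCLM.hasFDerivAt.comp x hψ.hasFDerivAt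
    rw [partialDeriv]
    erw [this.fderiv]
    simp
  rw [hre, him, ← Complex.normSq_eq_norm_sq, Complex.normSq_apply]
  simp
  ring

theorem mul_integral_div_le_of_regularized {d : ℕ} {f : EuclideanSpace ℝ (Fin d) → ℝ}
    (hf : Continuous f) (hf0 : ∀ x, 0 ≤ f x) {m X ε₀ : ℝ} (hε₀ : 0 < ε₀)
    (hm : 0 ≤ m)
    (h : ∀ ε, 0 < ε → ε ≤ ε₀ → m * ∫ x, f x * (‖x‖ ^ 2 / (‖x‖ ^ 2 + ε) ^ 2) ≤ X) :
    m * ∫ x, f x / ‖x‖ ^ 2 ≤ X := by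
  by_cases hi : Integrable fun x => f x / ‖x‖ ^ 2
  · have hlim : Filter.Tendsto (fun ε : ℝ => ∫ x, f x * (‖x‖ ^ 2 / (‖x‖ ^ 2 + ε) ^ 2))
        (nhdsWithin 0 (Set.Ioi 0)) (nhds (∫ x, f x / ‖x‖ ^ 2)) := by
      apply tendsto_integral_filter_of_dominated_convergence (fun x => f x / ‖x‖ ^ 2)
      · filter_upwards [self_mem_nhdsWithin] with ε hε
        have hε : 0 < ε := hε
        refine (hf.mul (Continuous.div (by fun_prop) (by fun_prop) fun x => ?_)).aestronglyMeasurable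
        positivity
      · filter_upwards [self_mem_nhdsWithin] with ε hε
        have hε : 0 < ε := hε
        refine Filter.Eventually.of_forall fun x => ?_
        have hfx := hf0 x
        rw [Real.norm_of_nonneg (by positivity), div_eq_mul_inv (f x)]
        gcongr
        rcases (norm_nonneg x).eq_or_lt with h0 | h0
        · rw [← h0]; simp
        · rw [← one_div, div_le_div_iff₀ (by positivity) (by positivity)]
          nlinarith [sq_nonneg ‖x‖]
      · exact hi
      · refine Filter.Eventually.of_forall fun x => ?_
        rcases (norm_nonneg x).eq_or_lt with h0 | h0
        · rw [← h0]; simp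
        · have hc : ContinuousAt (fun ε : ℝ => f x * (‖x‖ ^ 2 / (‖x‖ ^ 2 + ε) ^ 2)) 0 := by
            refine continuousAt_const.mul (ContinuousAt.div (by fun_prop) (by fun_prop) ?_)
            positivity
          have h1 := hc.tendsto.mono_left (nhdsWithin_le_nhds (s := Set.Ioi 0))
          have h2 : f x * (‖x‖ ^ 2 / (‖x‖ ^ 2 + 0) ^ 2) = f x / ‖x‖ ^ 2 := by
            field_simp
            ring
          rwa [h2] at h1
    refine le_of_tendsto (hlim.const_mul m) ?_
    filter_upwards [Ioc_mem_nhdsGT hε₀] with ε hε using h ε hε.1 hε.2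
  · rw [integral_undef hi, mul_zero]
    refine le_trans (mul_nonneg hm (integral_nonneg fun x => ?_)) (h ε₀ hε₀ le_rfl)
    have := hf0 x
    positivity

theorem stmt0 (d : ℕ) (hd : 2 ≤ d)
    (B : EuclideanSpace ℝ (Fin d) → Fin d → Fin d → ℝ)
    (hBsmooth : ∀ j k, ContDiff ℝ (⊤ : ℕ∞) fun x => B x j k)
    (hBskew : ∀ x j k, B x k j = - B x j k)
    (hBclosed : ∀ (x : EuclideanSpace ℝ (Fin d)) (j k l : Fin d),
      fderiv ℝ (fun y => B y k l) x (EuclideanSpace.single j (1:ℝ))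
      + fderiv ℝ (fun y => B y l j) x (EuclideanSpace.single k (1:ℝ))
      + fderiv ℝ (fun y => B y j k) x (EuclideanSpace.single l (1:ℝ)) = 0)
    (hBne : B ≠ 0) :
    ∃ c > (0:ℝ), ∀ A : EuclideanSpace ℝ (Fin d) → EuclideanSpace ℝ (Fin d),
      ContDiff ℝ (⊤ : ℕ∞) A →
      (∀ (x : EuclideanSpace ℝ (Fin d)) (j k : Fin d),
        fderiv ℝ (fun y => A y k) x (EuclideanSpace.single j (1:ℝ))
        - fderiv ℝ (fun y => A y j) x (EuclideanSpace.single k (1:ℝ)) = B x j k) →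
      ∀ ψ : EuclideanSpace ℝ (Fin d) → ℂ, ContDiff ℝ (⊤ : ℕ∞) ψ → HasCompactSupport ψ →
      (∫ x, magEnergy d A ψ x) - ((d - 2 : ℝ)/2)^2 * (∫ x, ‖ψ x‖^2 / ‖x‖^2)
      ≥ c * ∫ x, ‖ψ x‖^2 / (1 + ‖x‖^2 * (Real.log ‖x‖)^2) := by
  obtain ⟨x₀, j, k, hpos⟩ : ∃ x j k, 0 < B x j k := by
    by_contra! hle
    refine hBne (funext fun x => funext fun j => funext fun k => le_antisymm (hle x j k) ?_)
    have h1 := hle x k j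
    rw [hBskew x j k] at h1
    simpa using h1
  have hβ : Continuous fun x => B x j k := (hBsmooth j k).continuous
  obtain ⟨p, hp, hβp⟩ : ∃ p, p ≠ 0 ∧ 0 < B p j k := by
    have : Nontrivial (EuclideanSpace ℝ (Fin d)) :=
      have : Nonempty (Fin d) := ⟨j⟩
      inferInstance
    have hdense : Dense ({0}ᶜ : Set (EuclideanSpace ℝ (Fin d))) := dense_compl_singleton 0
    obtain ⟨p, hp₁, hp₂⟩ := hdense.inter_open_nonempty _ (isOpen_lt continuous_const hβ) ⟨x₀, hpos⟩
    exact ⟨p, hp₂, hp₁⟩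
  obtain ⟨c, hc, ε₀, hε₀, hmain⟩ := exists_regularized_magnetic_hardy hd hβ hp hβp j k
  refine ⟨c / 32, by positivity, ?_⟩
  intro A hA hAB ψ hψ hψs
  have hu : ContDiff ℝ (⊤ : ℕ∞) fun x => (ψ x).re := Complex.reCLM.contDiff.comp hψ
  have hv : ContDiff ℝ (⊤ : ℕ∞) fun x => (ψ x).im := Complex.imCLM.contDiff.comp hψ
  have hus : HasCompactSupport fun x => (ψ x).re := hψs.comp_left (g := Complex.re) rfl
  have hvs : HasCompactSupport fun x => (ψ x).im := hψs.comp_left (g := Complex.im) rfl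
  have hnorm : ∀ x, (ψ x).re * (ψ x).re + (ψ x).im * (ψ x).im = ‖ψ x‖ ^ 2 := fun x => by
    rw [← Complex.normSq_eq_norm_sq, Complex.normSq_apply]
  have henergy : ∀ x, magEnergy d A ψ x =
      ∑ i, ((partialDeriv i (fun y => (ψ y).re) x + A x i * (ψ x).im) ^ 2 +
        (partialDeriv i (fun y => (ψ y).im) x - A x i * (ψ x).re) ^ 2) :=
    fun x => magEnergy_eq_sum_partialDeriv A (hψ.differentiable (by simp) x)
  have hreg := hmain A hA (fun x => hAB x j k) _ _ hu hv hus hvs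
  simp only [← henergy, hnorm] at hreg
  have hψc : Continuous fun x => ‖ψ x‖ ^ 2 := hψ.continuous.norm.pow 2
  have hhardy := mul_integral_div_le_of_regularized hψc (fun x => sq_nonneg _)
    (X := (∫ x, magEnergy d A ψ x) - c * ∫ x, ‖ψ x‖ ^ 2 * logWeight (‖x‖ ^ 2)) hε₀
    (sq_nonneg ((d - 2 : ℝ) / 2)) fun ε hε hεε₀ => by linarith [hreg ε hε hεε₀]
  have hweight : ∫ x, ‖ψ x‖ ^ 2 / (1 + ‖x‖ ^ 2 * (Real.log ‖x‖) ^ 2) ≤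
      ∫ x, 32 * (‖ψ x‖ ^ 2 * logWeight (‖x‖ ^ 2)) := by
    refine integral_mono_of_nonneg (Filter.Eventually.of_forall fun x => ?_) ?_
      (Filter.Eventually.of_forall fun x => ?_)
    · simp only [Pi.zero_apply]
      positivity
    · refine Integrable.const_mul (Continuous.integrable_of_hasCompactSupport (hψc.mul ?_) ?_) 32
      · exact continuousOn_logWeight.comp_continuous (by fun_prop) fun x => sq_nonneg ‖x‖
      · exact HasCompactSupport.mul_right (hψs.comp_left (g := fun z : ℂ => ‖z‖ ^ 2) (by simp))
    · have h1 := mul_le_mul_of_nonneg_left (inv_log_weight_le ‖x‖) (sq_nonneg ‖ψ x‖)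
      simp only
      rw [mul_one_div] at h1
      linarith
  rw [integral_const_mul] at hweight
  have hfin := mul_le_mul_of_nonneg_left hweight (show 0 ≤ c / 32 by positivity)
  linarith
end

section
/- Let B : ℝ² → ℝ be a smooth compactly supported function and let Φ_B := (1/(2π)) ∫_{ℝ²} B(x) dx be its total flux. If Φ_B ∉ ℤ, then there exists a constant c > 0 such that for every smooth A : ℝ² → ℝ² with ∂_1 A_2 − ∂_2 A_1 = B on ℝ² and every ψ ∈ C_c^∞(ℝ², ℂ), one has ∫_{ℝ²} |∇ψ(x) − iA(x)ψ(x)|² dx ≥ c ∫_{ℝ²} |ψ(x)|²/(1 + |x|²) dx. -/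
open MeasureTheory Real

/-- The magnetic energy density `|∇ψ(x) − iA(x)ψ(x)|²` in the plane. -/
noncomputable def magEnergy2 (A : EuclideanSpace ℝ (Fin 2) → EuclideanSpace ℝ (Fin 2))
    (ψ : EuclideanSpace ℝ (Fin 2) → ℂ) (x : EuclideanSpace ℝ (Fin 2)) : ℝ :=
  ∑ j, ‖fderiv ℝ ψ x (EuclideanSpace.single j (1:ℝ)) - Complex.I * (A x j : ℝ) * ψ x‖ ^ 2

/-- Cauchy–Schwarz for the square of an integral over a period. -/
lemma sq_integral_norm_le {f : ℝ → ℂ} (hf : Continuous f) :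
    (∫ t in (-π)..π, ‖f t‖) ^ 2 ≤ 2 * π * ∫ t in (-π)..π, ‖f t‖ ^ 2 := by
  set m := ∫ t in (-π)..π, ‖f t‖ with hm
  have hi : ∀ g : ℝ → ℝ, Continuous g → IntervalIntegrable g volume (-π) π :=
    fun g hg => hg.intervalIntegrable _ _
  have h0 : 0 ≤ ∫ t in (-π)..π, (2 * π * ‖f t‖ - m) ^ 2 :=
    intervalIntegral.integral_nonneg (by linarith [pi_pos]) fun t _ => sq_nonneg _
  have h1 : (∫ t in (-π)..π, (2 * π * ‖f t‖ - m) ^ 2)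
      = (2 * π) ^ 2 * (∫ t in (-π)..π, ‖f t‖ ^ 2) - 2 * π * m ^ 2 := by
    have : ∀ t, (2 * π * ‖f t‖ - m) ^ 2
        = (2 * π) ^ 2 * ‖f t‖ ^ 2 - 4 * π * m * ‖f t‖ + m ^ 2 := fun t => by ring
    simp_rw [this]
    rw [intervalIntegral.integral_add (hi _ (by fun_prop)) (hi _ (by fun_prop)),
      intervalIntegral.integral_sub (hi _ (by fun_prop)) (hi _ (by fun_prop)),
      intervalIntegral.integral_const_mul, intervalIntegral.integral_const_mul, ← hm]
    simp only [intervalIntegral.integral_const, smul_eq_mul]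
    ring
  rw [h1] at h0
  have : 0 ≤ 2 * π * (2 * π * (∫ t in (-π)..π, ‖f t‖ ^ 2) - m ^ 2) := by linarith
  have := nonneg_of_mul_nonneg_right this (by positivity)
  linarith

/-- Magnetic Poincaré inequality on the circle: if the total flux `s` of `a` is not a multiple of
`2π`, then the operator `d/dθ - i a` on periodic functions is bounded below. -/
lemma circle_magnetic_poincare {s : ℝ} (hs : Complex.exp (-(Complex.I * s)) ≠ 1) {a : ℝ → ℝ}
    (ha : Continuous a) (has : ∫ t in (-π)..π, a t = s) {u u' : ℝ → ℂ}
    (hu : ∀ t, HasDerivAt u (u' t) t) (hu' : Continuous u') (hper : u π = u (-π)) :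
    ∫ t in (-π)..π, ‖u t‖ ^ 2 ≤
      (2 * π * (1 / ‖Complex.exp (-(Complex.I * s)) - 1‖ + 1)) ^ 2 *
        ∫ t in (-π)..π, ‖u' t - Complex.I * a t * u t‖ ^ 2 := by
  set z := Complex.exp (-(Complex.I * s)) - 1 with hz
  have hzpos : 0 < ‖z‖ := norm_pos_iff.2 (sub_ne_zero.2 hs)
  have huc : Continuous u := continuous_iff_continuousAt.2 fun t => (hu t).continuousAt
  let b : ℝ → ℝ := fun t => ∫ τ in (-π)..t, a τ
  have hb : ∀ t, HasDerivAt b (a t) t := fun t =>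
    intervalIntegral.integral_hasDerivAt_right (ha.intervalIntegrable _ _)
      (ha.stronglyMeasurableAtFilter _ _) ha.continuousAt
  have hbc : Continuous b := continuous_iff_continuousAt.2 fun t => (hb t).continuousAt
  let e : ℝ → ℂ := fun t => Complex.exp (-(Complex.I * b t))
  have hec : Continuous e := by fun_prop
  have hen : ∀ t, ‖e t‖ = 1 := fun t => by simp [e, Complex.norm_exp]
  let w : ℝ → ℂ := fun t => u' t - Complex.I * a t * u t
  have hwc : Continuous w := by fun_prop
  let v : ℝ → ℂ := fun t => e t * u t
  have hv : ∀ t, HasDerivAt v (e t * w t) t := fun t => by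
    have h1 : HasDerivAt e (e t * (-(Complex.I * a t))) t :=
      (((hb t).ofReal_comp).const_mul Complex.I).neg.cexp
    exact (h1.mul (hu t)).congr_deriv (by simp only [w]; ring)
  have hint : ∀ t, ∫ τ in (-π)..t, e τ * w τ = v t - v (-π) := fun t =>
    intervalIntegral.integral_eq_sub_of_hasDerivAt (fun x _ => hv x)
      ((hec.mul hwc).intervalIntegrable _ _)
  set m := ∫ t in (-π)..π, ‖w t‖ with hm
  have hbound : ∀ t ∈ Set.Icc (-π) π, ‖v t - v (-π)‖ ≤ m := fun t ht => by
    rw [← hint t]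
    calc _ ≤ ∫ τ in (-π)..t, ‖e τ * w τ‖ := intervalIntegral.norm_integral_le_integral_norm ht.1
      _ = ∫ τ in (-π)..t, ‖w τ‖ := by simp [hen]
      _ ≤ m := intervalIntegral.integral_mono_interval le_rfl ht.1 ht.2
          (Filter.Eventually.of_forall fun _ => norm_nonneg _) (hwc.norm.intervalIntegrable _ _)
  have hstart : ‖v (-π)‖ ≤ 1 / ‖z‖ * m := by
    have h1 := hbound π ⟨by linarith [pi_pos], le_rfl⟩
    have h2 : v π - v (-π) = z * v (-π) := by
      have hb0 : b (-π) = 0 := intervalIntegral.integral_same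
      have hbs : b π = s := has
      simp only [v, e, hb0, hbs, hper, hz]
      simp
      ring
    rw [h2, norm_mul] at h1
    rw [one_div, inv_mul_eq_div, le_div_iff₀ hzpos]
    linarith
  have hpt : ∀ t ∈ Set.Icc (-π) π, ‖u t‖ ^ 2 ≤ ((1 / ‖z‖ + 1) * m) ^ 2 := fun t ht => by
    have h1 : ‖u t‖ = ‖v t‖ := by simp [v, hen]
    have h2 : ‖v t‖ ≤ ‖v t - v (-π)‖ + ‖v (-π)‖ := by
      simpa using norm_add_le (v t - v (-π)) (v (-π))
    rw [h1]
    gcongr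
    linarith [hbound t ht]
  calc ∫ t in (-π)..π, ‖u t‖ ^ 2 ≤ ∫ _ in (-π)..π, ((1 / ‖z‖ + 1) * m) ^ 2 :=
        intervalIntegral.integral_mono_on (by linarith [pi_pos])
          ((huc.norm.pow 2).intervalIntegrable _ _) (by simp) hpt
    _ = 2 * π * (1 / ‖z‖ + 1) ^ 2 * m ^ 2 := by
        simp only [intervalIntegral.integral_const, smul_eq_mul]
        ring
    _ ≤ 2 * π * (1 / ‖z‖ + 1) ^ 2 * (2 * π * ∫ t in (-π)..π, ‖w t‖ ^ 2) := by
        gcongr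
        exact sq_integral_norm_le hwc
    _ = _ := by simp only [w]; ring

/-- The point of the plane with polar coordinates `p = (r, θ)`. -/
noncomputable def polarPoint (p : ℝ × ℝ) : EuclideanSpace ℝ (Fin 2) :=
  !₂[p.1 * cos p.2, p.1 * sin p.2]

@[simp] lemma polarPoint_zero (p : ℝ × ℝ) : polarPoint p 0 = p.1 * cos p.2 := rfl

@[simp] lemma polarPoint_one (p : ℝ × ℝ) : polarPoint p 1 = p.1 * sin p.2 := rfl

lemma norm_sq_eq_coords (x : EuclideanSpace ℝ (Fin 2)) : ‖x‖ ^ 2 = x 0 ^ 2 + x 1 ^ 2 := by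
  simp [EuclideanSpace.norm_sq_eq]

lemma norm_polarPoint {p : ℝ × ℝ} (hp : 0 ≤ p.1) : ‖polarPoint p‖ = p.1 := by
  rw [← sq_eq_sq₀ (norm_nonneg _) hp, norm_sq_eq_coords, polarPoint_zero, polarPoint_one]
  linear_combination p.1 ^ 2 * sin_sq_add_cos_sq p.2

lemma contDiff_polarPoint : ContDiff ℝ 1 polarPoint := by
  rw [contDiff_euclidean]
  intro i
  fin_cases i
  · simp only [Fin.zero_eta, polarPoint_zero]; fun_prop
  · simp only [Fin.mk_one, polarPoint_one]; fun_prop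

/-- A linear map on the plane is determined by its values on the standard basis. -/
lemma map_eq_coords {F : Type*} [NormedAddCommGroup F] [NormedSpace ℝ F]
    (L : EuclideanSpace ℝ (Fin 2) →L[ℝ] F) (x : EuclideanSpace ℝ (Fin 2)) :
    L x = x 0 • L (EuclideanSpace.single 0 1) + x 1 • L (EuclideanSpace.single 1 1) := by
  rw [← map_smul, ← map_smul, ← map_add]
  congr 1
  ext i
  fin_cases i <;> simp

/-- The equivalence of the product plane with the Euclidean plane preserves the volume. -/
lemma measurePreserving_prod_euclidean :
    MeasurePreserving ((MeasurableEquiv.finTwoArrow (α := ℝ)).symm.trans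
      (MeasurableEquiv.toLp 2 (Fin 2 → ℝ))) :=
  ((volume_preserving_finTwoArrow ℝ).symm _).trans (PiLp.volume_preserving_toLp (Fin 2))

lemma integral_eq_integral_polarPoint (f : EuclideanSpace ℝ (Fin 2) → ℝ) :
    ∫ x, f x = ∫ p in Set.Ioi (0 : ℝ) ×ˢ Set.Ioo (-π) π, p.1 * f (polarPoint p) := by
  rw [← measurePreserving_prod_euclidean.integral_comp (MeasurableEquiv.measurableEmbedding _),
    ← integral_comp_polarCoord_symm]
  rfl

lemma lintegral_eq_lintegral_polarPoint {f : EuclideanSpace ℝ (Fin 2) → ENNReal}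
    (hf : Measurable f) :
    ∫⁻ x, f x = ∫⁻ r in Set.Ioi (0 : ℝ), ∫⁻ θ in Set.Ioo (-π) π,
      ENNReal.ofReal r * f (polarPoint (r, θ)) := by
  rw [← measurePreserving_prod_euclidean.lintegral_comp_emb (MeasurableEquiv.measurableEmbedding _),
    ← lintegral_comp_polarCoord_symm, polarCoord_target, Measure.volume_eq_prod,
    ← Measure.prod_restrict, lintegral_prod]
  · rfl
  · have hm : Measurable fun p : ℝ × ℝ => ENNReal.ofReal p.1 * f (polarPoint p) :=
      (ENNReal.measurable_ofReal.comp measurable_fst).mul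
        (hf.comp contDiff_polarPoint.continuous.measurable)
    exact hm.aemeasurable

lemma hasFDerivAt_polarPoint (p : ℝ × ℝ) :
    HasFDerivAt polarPoint (fderiv ℝ polarPoint p) p :=
  (contDiff_polarPoint.differentiable (by norm_num) p).hasFDerivAt

lemma hasFDerivAt_polarPoint_coord (p : ℝ × ℝ) (i : Fin 2) :
    HasFDerivAt (fun q => polarPoint q i) ((PiLp.proj 2 _ i).comp (fderiv ℝ polarPoint p)) p :=
  ((PiLp.proj (𝕜 := ℝ) 2 (fun _ : Fin 2 => ℝ) i).hasFDerivAt).comp p (hasFDerivAt_polarPoint p)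

lemma fderiv_polarPoint_coord (p v : ℝ × ℝ) :
    fderiv ℝ polarPoint p v 0 = v.1 * cos p.2 - p.1 * sin p.2 * v.2 ∧
      fderiv ℝ polarPoint p v 1 = v.1 * sin p.2 + p.1 * cos p.2 * v.2 := by
  have h := hasFDerivAt_polarPoint_coord p
  have h0 := (h 0).unique (hasFDerivAt_fst.mul
    ((hasDerivAt_cos p.2).comp_hasFDerivAt p hasFDerivAt_snd))
  have h1 := (h 1).unique (hasFDerivAt_fst.mul
    ((hasDerivAt_sin p.2).comp_hasFDerivAt p hasFDerivAt_snd))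
  have h0 := DFunLike.congr_fun h0 v
  have h1 := DFunLike.congr_fun h1 v
  simp at h0 h1
  constructor
  · rw [h0]; ring
  · rw [h1]; ring

/-- Chain rule in polar coordinates. -/
lemma hasFDerivAt_comp_polarPoint {F : Type*} [NormedAddCommGroup F] [NormedSpace ℝ F]
    {f : EuclideanSpace ℝ (Fin 2) → F} (hf : Differentiable ℝ f) (p : ℝ × ℝ) :
    HasFDerivAt (fun q => f (polarPoint q))
      ((fderiv ℝ f (polarPoint p)).comp (fderiv ℝ polarPoint p)) p :=
  (hf _).hasFDerivAt.comp p (hasFDerivAt_polarPoint p)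

/-- Stokes' theorem on a disc containing the support of the magnetic field: the circulation of the
vector potential along the boundary circle is the total flux. -/
lemma circulation_eq_integral {B : EuclideanSpace ℝ (Fin 2) → ℝ} (hB : Continuous B) {R : ℝ}
    (hR : 0 ≤ R) (hBR : ∀ x, R ≤ ‖x‖ → B x = 0)
    {A : EuclideanSpace ℝ (Fin 2) → EuclideanSpace ℝ (Fin 2)} (hA : Differentiable ℝ A)
    (hcurl : ∀ x, fderiv ℝ (fun y => A y 1) x (EuclideanSpace.single 0 (1:ℝ))
        - fderiv ℝ (fun y => A y 0) x (EuclideanSpace.single 1 (1:ℝ)) = B x) :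
    ∫ θ in (-π)..π, (A (polarPoint (R, θ)) 1 * (R * cos θ) - A (polarPoint (R, θ)) 0 * (R * sin θ))
      = ∫ x, B x := by
  have hpi : -π ≤ π := by linarith [pi_pos]
  have hAi : ∀ i, Differentiable ℝ fun y => A y i := differentiable_euclidean.1 hA
  let f : ℝ × ℝ → ℝ := fun p =>
    A (polarPoint p) 1 * polarPoint p 0 - A (polarPoint p) 0 * polarPoint p 1
  let g : ℝ × ℝ → ℝ := fun p =>
    -(A (polarPoint p) 0 * cos p.2 + A (polarPoint p) 1 * sin p.2)
  have hcos := fun p : ℝ × ℝ =>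
    (hasDerivAt_cos p.2).comp_hasFDerivAt p (hasFDerivAt_snd (𝕜 := ℝ) (E := ℝ) (F := ℝ))
  have hsin := fun p : ℝ × ℝ =>
    (hasDerivAt_sin p.2).comp_hasFDerivAt p (hasFDerivAt_snd (𝕜 := ℝ) (E := ℝ) (F := ℝ))
  have hP := hasFDerivAt_polarPoint_coord
  have hf := fun p => ((hasFDerivAt_comp_polarPoint (hAi 1) p).mul (hP p 0)).sub
    ((hasFDerivAt_comp_polarPoint (hAi 0) p).mul (hP p 1))
  have hg := fun p => (((hasFDerivAt_comp_polarPoint (hAi 0) p).mul (hcos p)).add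
    ((hasFDerivAt_comp_polarPoint (hAi 1) p).mul (hsin p))).neg
  have hdiv : ∀ p : ℝ × ℝ, fderiv ℝ f p (1, 0) + fderiv ℝ g p (0, 1) = p.1 * B (polarPoint p) := by
    intro p
    rw [(show HasFDerivAt f _ p from hf p).fderiv, (show HasFDerivAt g _ p from hg p).fderiv,
      ← hcurl]
    obtain ⟨h10, h11⟩ := fderiv_polarPoint_coord p (1, 0)
    obtain ⟨h20, h21⟩ := fderiv_polarPoint_coord p (0, 1)
    simp only [fun i v =>
        map_eq_coords (fderiv ℝ (fun y => A y i) (polarPoint p)) (fderiv ℝ polarPoint p v),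
      add_apply, sub_apply, neg_apply,
      smul_apply, ContinuousLinearMap.comp_apply, PiLp.proj_apply,
      ContinuousLinearMap.coe_snd', h10, h11, h20, h21, smul_eq_mul, polarPoint_zero,
      Function.comp_apply,      polarPoint_one]
    linear_combination (p.1 * (fderiv ℝ (fun y => A y 1) (polarPoint p) (EuclideanSpace.single 0 1)
      - fderiv ℝ (fun y => A y 0) (polarPoint p) (EuclideanSpace.single 1 1)))
      * sin_sq_add_cos_sq p.2
  have hBc : Continuous fun p : ℝ × ℝ => p.1 * B (polarPoint p) :=
    continuous_fst.mul (hB.comp contDiff_polarPoint.continuous)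
  have key := integral2_divergence_prod_of_hasFDerivAt f g (fderiv ℝ f) (fderiv ℝ g) 0 (-π) R π
    (fun p _ => (hf p).continuousAt.continuousWithinAt)
    (fun p _ => (hg p).continuousAt.continuousWithinAt)
    (fun p _ => (hf p).differentiableAt.hasFDerivAt)
    (fun p _ => (hg p).differentiableAt.hasFDerivAt)
    (by
      simp_rw [hdiv]
      exact hBc.continuousOn.integrableOn_compact (isCompact_uIcc.prod isCompact_uIcc))
  simp_rw [hdiv] at key
  have hper : ∀ r, g (r, π) = g (r, -π) := fun r => by
    have : polarPoint (r, π) = polarPoint (r, -π) := by simp [polarPoint]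
    simp [g, this]
  have hzero : ∀ θ, f (0, θ) = 0 := fun θ => by simp [f]
  simp only [hper, sub_self, zero_add, hzero, intervalIntegral.integral_zero, sub_zero] at key
  rw [integral_eq_integral_polarPoint]
  refine key.symm.trans ?_
  rw [setIntegral_eq_of_subset_of_forall_sdiff_eq_zero
    (s := Set.Ioc 0 R ×ˢ Set.Ioo (-π) π) (measurableSet_Ioi.prod measurableSet_Ioo)
    (Set.prod_mono Set.Ioc_subset_Ioi_self le_rfl)]
  · rw [Measure.volume_eq_prod, setIntegral_prod]
    · rw [intervalIntegral.integral_of_le hR]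
      simp_rw [intervalIntegral.integral_of_le hpi, integral_Ioc_eq_integral_Ioo]
    · exact (hBc.continuousOn.integrableOn_compact (isCompact_Icc.prod isCompact_Icc)).mono_set
        (Set.prod_mono Set.Ioc_subset_Icc_self Set.Ioo_subset_Icc_self)
  · rintro p ⟨⟨hp1, hp2⟩, hp3⟩
    have : R ≤ p.1 := by
      by_contra! h
      exact hp3 ⟨⟨hp1, h.le⟩, hp2⟩
    rw [hBR _ (by rwa [norm_polarPoint (le_of_lt hp1)]), mul_zero]

lemma continuous_magEnergy2 {A : EuclideanSpace ℝ (Fin 2) → EuclideanSpace ℝ (Fin 2)}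
    (hA : Continuous A) {ψ : EuclideanSpace ℝ (Fin 2) → ℂ} (hψ : ContDiff ℝ 1 ψ) :
    Continuous (magEnergy2 A ψ) := by
  have h := hψ.continuous_fderiv (by norm_num)
  have h' := hψ.continuous
  unfold magEnergy2
  fun_prop

lemma magEnergy2_nonneg (A : EuclideanSpace ℝ (Fin 2) → EuclideanSpace ℝ (Fin 2))
    (ψ : EuclideanSpace ℝ (Fin 2) → ℂ) (x : EuclideanSpace ℝ (Fin 2)) : 0 ≤ magEnergy2 A ψ x :=
  Finset.sum_nonneg fun _ _ => sq_nonneg _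

lemma integrable_magEnergy2 {A : EuclideanSpace ℝ (Fin 2) → EuclideanSpace ℝ (Fin 2)}
    (hA : Continuous A) {ψ : EuclideanSpace ℝ (Fin 2) → ℂ} (hψ : ContDiff ℝ 1 ψ)
    (hc : HasCompactSupport ψ) : Integrable (magEnergy2 A ψ) := by
  refine (continuous_magEnergy2 hA hψ).integrable_of_hasCompactSupport (hc.mono' fun x hx => ?_)
  by_contra hx'
  have h1 : fderiv ℝ ψ x = 0 :=
    image_eq_zero_of_notMem_tsupport fun h => hx' (tsupport_fderiv_subset ℝ h)
  exact hx (by simp [magEnergy2, h1, image_eq_zero_of_notMem_tsupport hx'])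

lemma setLIntegral_ofReal_eq_ofReal_intervalIntegral {F : ℝ → ℝ} (hF : Continuous F)
    (h0 : ∀ θ, 0 ≤ F θ) :
    ∫⁻ θ in Set.Ioo (-π) π, ENNReal.ofReal (F θ) = ENNReal.ofReal (∫ θ in (-π)..π, F θ) := by
  rw [intervalIntegral.integral_of_le (by linarith [pi_pos]), integral_Ioc_eq_integral_Ioo,
    ofReal_integral_eq_lintegral_ofReal _ (Filter.Eventually.of_forall h0)]
  exact (hF.continuousOn.integrableOn_compact isCompact_Icc).mono_set Set.Ioo_subset_Icc_self

lemma norm_sq_rotate_le (r θ : ℝ) (z w : ℂ) :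
    ‖((r * cos θ : ℝ) : ℂ) * w - ((r * sin θ : ℝ) : ℂ) * z‖ ^ 2 ≤ r ^ 2 * (‖z‖ ^ 2 + ‖w‖ ^ 2) := by
  simp only [Complex.sq_norm, Complex.normSq_apply, Complex.sub_re, Complex.sub_im, Complex.mul_re,
    Complex.mul_im, Complex.ofReal_re, Complex.ofReal_im, zero_mul, sub_zero, add_zero]
  have h := sin_sq_add_cos_sq θ
  have key : r ^ 2 * (z.re * z.re + z.im * z.im + (w.re * w.re + w.im * w.im))
      = (r * cos θ * w.re - r * sin θ * z.re) * (r * cos θ * w.re - r * sin θ * z.re)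
      + (r * cos θ * w.im - r * sin θ * z.im) * (r * cos θ * w.im - r * sin θ * z.im)
      + (r * (sin θ * w.re + cos θ * z.re)) ^ 2 + (r * (sin θ * w.im + cos θ * z.im)) ^ 2 := by
    linear_combination (-(r ^ 2 * (z.re * z.re + z.im * z.im + (w.re * w.re + w.im * w.im)))) * h
  rw [key]
  nlinarith [sq_nonneg (r * (sin θ * w.re + cos θ * z.re)),
    sq_nonneg (r * (sin θ * w.im + cos θ * z.im))]

/-- Magnetic Hardy inequality on a circle surrounding the support of the magnetic field. -/
lemma integral_circle_le_magEnergy2 {B : EuclideanSpace ℝ (Fin 2) → ℝ} (hB : Continuous B)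
    (hs : Complex.exp (-(Complex.I * (∫ x, B x : ℝ))) ≠ 1) {r : ℝ} (hr : 0 ≤ r)
    (hBr : ∀ x, r ≤ ‖x‖ → B x = 0)
    {A : EuclideanSpace ℝ (Fin 2) → EuclideanSpace ℝ (Fin 2)} (hA : Differentiable ℝ A)
    (hcurl : ∀ x, fderiv ℝ (fun y => A y 1) x (EuclideanSpace.single 0 (1:ℝ))
        - fderiv ℝ (fun y => A y 0) x (EuclideanSpace.single 1 (1:ℝ)) = B x)
    {ψ : EuclideanSpace ℝ (Fin 2) → ℂ} (hψ : ContDiff ℝ 1 ψ) :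
    ∫ θ in (-π)..π, ‖ψ (polarPoint (r, θ))‖ ^ 2 ≤
      (2 * π * (1 / ‖Complex.exp (-(Complex.I * (∫ x, B x : ℝ))) - 1‖ + 1)) ^ 2 *
        (r ^ 2 * ∫ θ in (-π)..π, magEnergy2 A ψ (polarPoint (r, θ))) := by
  have hAc := hA.continuous
  have hψ' := hψ.continuous_fderiv (by norm_num)
  have hψc := hψ.continuous
  have hP : Continuous fun θ : ℝ => polarPoint (r, θ) :=
    contDiff_polarPoint.continuous.comp (by fun_prop)
  let a : ℝ → ℝ := fun θ =>
    A (polarPoint (r, θ)) 1 * (r * cos θ) - A (polarPoint (r, θ)) 0 * (r * sin θ)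
  let u' : ℝ → ℂ := fun θ =>
    ((r * cos θ : ℝ) : ℂ) * fderiv ℝ ψ (polarPoint (r, θ)) (EuclideanSpace.single 1 1)
      - ((r * sin θ : ℝ) : ℂ) * fderiv ℝ ψ (polarPoint (r, θ)) (EuclideanSpace.single 0 1)
  have hac : Continuous a := by fun_prop
  have hu'c : Continuous u' := by fun_prop
  have hu : ∀ θ, HasDerivAt (fun θ => ψ (polarPoint (r, θ))) (u' θ) θ := fun θ => by
    have h1 : HasDerivAt (fun θ : ℝ => (r, θ)) ((0 : ℝ), (1 : ℝ)) θ :=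
      (hasDerivAt_const θ r).prodMk (hasDerivAt_id θ)
    have h2 := (hasFDerivAt_comp_polarPoint (hψ.differentiable (by norm_num)) (r, θ)).comp_hasDerivAt
      θ h1
    refine h2.congr_deriv ?_
    obtain ⟨h3, h4⟩ := fderiv_polarPoint_coord (r, θ) (0, 1)
    rw [ContinuousLinearMap.comp_apply, map_eq_coords, h3, h4]
    simp only [u', Complex.real_smul]
    push_cast
    ring
  have hEc : Continuous fun θ : ℝ => magEnergy2 A ψ (polarPoint (r, θ)) :=
    (continuous_magEnergy2 hAc hψ).comp hP
  refine (circle_magnetic_poincare hs hac (circulation_eq_integral hB hr hBr hA hcurl) hu hu'c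
    (by simp [polarPoint])).trans ?_
  gcongr
  rw [← intervalIntegral.integral_const_mul]
  refine intervalIntegral.integral_mono_on (by linarith [pi_pos])
    (Continuous.intervalIntegrable (by fun_prop) _ _)
    (Continuous.intervalIntegrable (by fun_prop) _ _) fun θ _ => ?_
  rw [magEnergy2, Fin.sum_univ_two]
  refine le_trans (le_of_eq ?_) (norm_sq_rotate_le r θ _ _)
  congr 2
  simp only [u', a]
  push_cast
  ring

/-- Magnetic Hardy inequality outside a disc containing the support of the magnetic field. -/
lemma lintegral_exterior_le_magEnergy2 {B : EuclideanSpace ℝ (Fin 2) → ℝ} (hB : Continuous B)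
    (hs : Complex.exp (-(Complex.I * (∫ x, B x : ℝ))) ≠ 1) {R : ℝ}
    (hBR : ∀ x, R ≤ ‖x‖ → B x = 0)
    {A : EuclideanSpace ℝ (Fin 2) → EuclideanSpace ℝ (Fin 2)} (hA : Differentiable ℝ A)
    (hcurl : ∀ x, fderiv ℝ (fun y => A y 1) x (EuclideanSpace.single 0 (1:ℝ))
        - fderiv ℝ (fun y => A y 0) x (EuclideanSpace.single 1 (1:ℝ)) = B x)
    {ψ : EuclideanSpace ℝ (Fin 2) → ℂ} (hψ : ContDiff ℝ 1 ψ) :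
    ∫⁻ x, ENNReal.ofReal (if R ≤ ‖x‖ then ‖ψ x‖ ^ 2 / ‖x‖ ^ 2 else 0) ≤
      ENNReal.ofReal ((2 * π * (1 / ‖Complex.exp (-(Complex.I * (∫ x, B x : ℝ))) - 1‖ + 1)) ^ 2) *
        ∫⁻ x, ENNReal.ofReal (magEnergy2 A ψ x) := by
  set K := (2 * π * (1 / ‖Complex.exp (-(Complex.I * (∫ x, B x : ℝ))) - 1‖ + 1)) ^ 2
  have hψc := hψ.continuous
  have hE := continuous_magEnergy2 hA.continuous hψ
  rw [lintegral_eq_lintegral_polarPoint, lintegral_eq_lintegral_polarPoint,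
    ← lintegral_const_mul' _ _ ENNReal.ofReal_ne_top]
  rotate_left
  · fun_prop
  · refine ENNReal.measurable_ofReal.comp (Measurable.ite ?_ (by fun_prop) (by fun_prop))
    exact measurableSet_le measurable_const measurable_norm
  refine setLIntegral_mono' measurableSet_Ioi fun r (hr : 0 < r) => ?_
  by_cases hRr : R ≤ r
  · have hP : Continuous fun θ : ℝ => polarPoint (r, θ) :=
      contDiff_polarPoint.continuous.comp (by fun_prop)
    have hEc : Continuous fun θ : ℝ => magEnergy2 A ψ (polarPoint (r, θ)) := hE.comp hP
    simp only [norm_polarPoint (p := (r, _)) hr.le, hRr, if_true]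
    rw [lintegral_const_mul' _ _ ENNReal.ofReal_ne_top,
      lintegral_const_mul' _ _ ENNReal.ofReal_ne_top, mul_left_comm,
      setLIntegral_ofReal_eq_ofReal_intervalIntegral (by fun_prop) (fun _ => by positivity),
      setLIntegral_ofReal_eq_ofReal_intervalIntegral hEc (fun _ => magEnergy2_nonneg _ _ _),
      ← ENNReal.ofReal_mul (p := K) (by positivity)]
    gcongr
    rw [intervalIntegral.integral_div, div_le_iff₀ (by positivity)]
    refine (integral_circle_le_magEnergy2 hB hs hr.le (fun x hx => hBR x (hRr.trans hx)) hA hcurl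
      hψ).trans (le_of_eq ?_)
    ring
  · simp [norm_polarPoint (p := (r, _)) hr.le, hRr]

/-- The integral of a directional derivative of a compactly supported function vanishes. -/
lemma integral_fderiv_eq_zero {g : EuclideanSpace ℝ (Fin 2) → ℝ} (hg : ContDiff ℝ 1 g)
    (hc : HasCompactSupport g) (v : EuclideanSpace ℝ (Fin 2)) :
    Integrable (fun x => fderiv ℝ g x v) ∧ ∫ x, fderiv ℝ g x v = 0 := by
  have hi : Integrable (fun x => fderiv ℝ g x v) :=
    ((hg.continuous_fderiv (by norm_num)).clm_apply continuous_const).integrable_of_hasCompactSupport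
      (hc.fderiv_apply ℝ v)
  refine ⟨hi, ?_⟩
  have h := integral_smul_fderiv_eq_neg_fderiv_smul_of_integrable (μ := volume) (v := v)
    (f := fun _ : EuclideanSpace ℝ (Fin 2) => (1 : ℝ)) (g := g) (by simp) (by simpa using hi)
    (by simpa using hg.continuous.integrable_of_hasCompactSupport hc) (fun _ _ => by fun_prop)
    (fun x _ => hg.differentiable (by norm_num) x)
  simpa using h

/-- The `j`-th component of the vector field `|ψ|² x / (1 + |x|²)`. -/
noncomputable def radialField (ψ : EuclideanSpace ℝ (Fin 2) → ℂ) (j : Fin 2)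
    (x : EuclideanSpace ℝ (Fin 2)) : ℝ :=
  x j * (1 + ‖x‖ ^ 2)⁻¹ * ‖ψ x‖ ^ 2

lemma contDiff_radialField {ψ : EuclideanSpace ℝ (Fin 2) → ℂ} (hψ : ContDiff ℝ 1 ψ) (j : Fin 2) :
    ContDiff ℝ 1 (radialField ψ j) := by
  have h1 : ContDiff ℝ 1 fun x : EuclideanSpace ℝ (Fin 2) => x j :=
    contDiff_euclidean.1 contDiff_id j
  have h2 : ContDiff ℝ 1 fun x : EuclideanSpace ℝ (Fin 2) => (1 + ‖x‖ ^ 2)⁻¹ :=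
    (contDiff_const.add (contDiff_norm_sq ℝ)).inv fun x => by positivity
  exact (h1.mul h2).mul (hψ.norm_sq ℝ)

lemma hasCompactSupport_radialField {ψ : EuclideanSpace ℝ (Fin 2) → ℂ} (hψ : HasCompactSupport ψ)
    (j : Fin 2) : HasCompactSupport (radialField ψ j) :=
  hψ.mono fun x hx h => hx (by simp [radialField, h])

lemma fderiv_radialField {ψ : EuclideanSpace ℝ (Fin 2) → ℂ} (hψ : Differentiable ℝ ψ) (j : Fin 2)
    (x : EuclideanSpace ℝ (Fin 2)) :
    fderiv ℝ (radialField ψ j) x (EuclideanSpace.single j 1) =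
      ((1 + ‖x‖ ^ 2)⁻¹ - 2 * x j ^ 2 * (1 + ‖x‖ ^ 2)⁻¹ ^ 2) * ‖ψ x‖ ^ 2
        + 2 * (x j * (1 + ‖x‖ ^ 2)⁻¹)
          * inner ℝ (ψ x) (fderiv ℝ ψ x (EuclideanSpace.single j 1)) := by
  have h1 := (PiLp.proj (𝕜 := ℝ) 2 (fun _ : Fin 2 => ℝ) j).hasFDerivAt (x := x)
  have h2 : HasFDerivAt (fun x : EuclideanSpace ℝ (Fin 2) => 1 + ‖x‖ ^ 2) _ x :=
    ((hasFDerivAt_id x).norm_sq).const_add 1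
  have h3 := (hasDerivAt_inv (x := 1 + ‖x‖ ^ 2) (by positivity)).comp_hasFDerivAt x h2
  have h4 := (h1.mul h3).mul ((hψ x).hasFDerivAt.norm_sq)
  rw [(show HasFDerivAt (radialField ψ j) _ x from h4).fderiv]
  simp [EuclideanSpace.inner_single_right]
  ring

lemma inner_mul_I_self (a : ℝ) (z : ℂ) : inner ℝ z (Complex.I * a * z) = 0 := by
  simp [Complex.inner]
  ring

lemma neg_le_two_mul_inner {R : ℝ} (hR : 0 < R) (t : ℝ) (z w : ℂ) :
    -(t ^ 2 * ‖z‖ ^ 2 / R ^ 2 + R ^ 2 * ‖w‖ ^ 2) ≤ 2 * t * inner ℝ z w := by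
  have h1 : |t * inner ℝ z w| ≤ |t| * (‖z‖ * ‖w‖) := by
    rw [abs_mul]
    gcongr
    exact abs_real_inner_le_norm z w
  have h2 : t ^ 2 * ‖z‖ ^ 2 / R ^ 2 = (|t| * ‖z‖ / R) ^ 2 := by
    rw [div_pow, mul_pow, sq_abs]
  have h3 : |t| * (‖z‖ * ‖w‖) = (|t| * ‖z‖ / R) * (R * ‖w‖) := by field_simp
  have := (abs_le.1 h1).1
  rw [h3] at this
  rw [h2]
  nlinarith [sq_nonneg (|t| * ‖z‖ / R - R * ‖w‖)]

/-- Pointwise lower bound for the divergence of `|ψ|² x / (1 + |x|²)`. -/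
lemma le_divergence_radialField {R : ℝ} (hR : 0 < R)
    (A : EuclideanSpace ℝ (Fin 2) → EuclideanSpace ℝ (Fin 2))
    {ψ : EuclideanSpace ℝ (Fin 2) → ℂ} (hψ : Differentiable ℝ ψ) (x : EuclideanSpace ℝ (Fin 2)) :
    (2 - ‖x‖ ^ 2 / R ^ 2) * (1 + ‖x‖ ^ 2)⁻¹ ^ 2 * ‖ψ x‖ ^ 2 ≤
      ∑ j, fderiv ℝ (radialField ψ j) x (EuclideanSpace.single j 1)
        + R ^ 2 * magEnergy2 A ψ x := by
  have hj : ∀ j, ((1 + ‖x‖ ^ 2)⁻¹ - 2 * x j ^ 2 * (1 + ‖x‖ ^ 2)⁻¹ ^ 2) * ‖ψ x‖ ^ 2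
      - (x j * (1 + ‖x‖ ^ 2)⁻¹) ^ 2 * ‖ψ x‖ ^ 2 / R ^ 2 ≤
      fderiv ℝ (radialField ψ j) x (EuclideanSpace.single j 1) + R ^ 2 *
        ‖fderiv ℝ ψ x (EuclideanSpace.single j (1:ℝ)) - Complex.I * (A x j : ℝ) * ψ x‖ ^ 2 := by
    intro j
    have h := neg_le_two_mul_inner hR (x j * (1 + ‖x‖ ^ 2)⁻¹) (ψ x)
      (fderiv ℝ ψ x (EuclideanSpace.single j (1:ℝ)) - Complex.I * (A x j : ℝ) * ψ x)
    rw [inner_sub_right, inner_mul_I_self, sub_zero] at h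
    rw [fderiv_radialField hψ]
    linarith
  have h0 := hj 0
  have h1 := hj 1
  have hw : (1 + ‖x‖ ^ 2)⁻¹ * (1 + ‖x‖ ^ 2) = 1 := inv_mul_cancel₀ (by positivity)
  simp only [magEnergy2, Fin.sum_univ_two]
  have hx := norm_sq_eq_coords x
  set w := (1 + ‖x‖ ^ 2)⁻¹
  refine le_trans (le_of_eq ?_) ((add_le_add h0 h1).trans (le_of_eq (by ring)))
  linear_combination ‖ψ x‖ ^ 2 * w * 2 * hw
    - (2 * w ^ 2 * ‖ψ x‖ ^ 2 + w ^ 2 * ‖ψ x‖ ^ 2 / R ^ 2) * hx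

/-- Pointwise bound of the Hardy density by a divergence, the energy and the exterior density. -/
lemma hardy_density_le {R : ℝ} (hR : 0 < R)
    (A : EuclideanSpace ℝ (Fin 2) → EuclideanSpace ℝ (Fin 2))
    {ψ : EuclideanSpace ℝ (Fin 2) → ℂ} (hψ : Differentiable ℝ ψ) (x : EuclideanSpace ℝ (Fin 2)) :
    ‖ψ x‖ ^ 2 / (1 + ‖x‖ ^ 2) ≤
      (1 + R ^ 2) * (∑ j, fderiv ℝ (radialField ψ j) x (EuclideanSpace.single j 1)
        + R ^ 2 * magEnergy2 A ψ x)
      + ((1 + R ^ 2) / R ^ 2 + 1) * (if R ≤ ‖x‖ then ‖ψ x‖ ^ 2 / ‖x‖ ^ 2 else 0) := by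
  have h := le_divergence_radialField hR A hψ x
  set D := ∑ j, fderiv ℝ (radialField ψ j) x (EuclideanSpace.single j 1)
        + R ^ 2 * magEnergy2 A ψ x
  have hD : (1 + R ^ 2) * ((2 - ‖x‖ ^ 2 / R ^ 2) * (1 + ‖x‖ ^ 2)⁻¹ ^ 2 * ‖ψ x‖ ^ 2)
    ≤ (1 + R ^ 2) * D := by gcongr
  have hR2 : 0 < R ^ 2 := by positivity
  split_ifs with hx
  · have hxpos : 0 < ‖x‖ := hR.trans_le hx
    have h1 : ‖ψ x‖ ^ 2 / (1 + ‖x‖ ^ 2) ≤ ‖ψ x‖ ^ 2 / ‖x‖ ^ 2 := by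
      gcongr
      linarith
    have h2 : ‖x‖ ^ 2 * (1 + ‖x‖ ^ 2)⁻¹ ^ 2 ≤ 1 / ‖x‖ ^ 2 := by
      rw [inv_pow, ← div_eq_mul_inv, div_le_div_iff₀ (by positivity) (by positivity)]
      nlinarith [sq_nonneg ‖x‖]
    have h3 : -((1 + R ^ 2) / R ^ 2 * (‖ψ x‖ ^ 2 / ‖x‖ ^ 2)) ≤
        (1 + R ^ 2) * ((2 - ‖x‖ ^ 2 / R ^ 2) * (1 + ‖x‖ ^ 2)⁻¹ ^ 2 * ‖ψ x‖ ^ 2) := by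
      have h4 : (1 + R ^ 2) / R ^ 2 * ‖ψ x‖ ^ 2 * (‖x‖ ^ 2 * (1 + ‖x‖ ^ 2)⁻¹ ^ 2) ≤
          (1 + R ^ 2) / R ^ 2 * ‖ψ x‖ ^ 2 * (1 / ‖x‖ ^ 2) := by gcongr
      have h5 : 0 ≤ 2 * (1 + R ^ 2) * (1 + ‖x‖ ^ 2)⁻¹ ^ 2 * ‖ψ x‖ ^ 2 := by positivity
      have h6 : (1 + R ^ 2) * ((2 - ‖x‖ ^ 2 / R ^ 2) * (1 + ‖x‖ ^ 2)⁻¹ ^ 2 * ‖ψ x‖ ^ 2)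
          = 2 * (1 + R ^ 2) * (1 + ‖x‖ ^ 2)⁻¹ ^ 2 * ‖ψ x‖ ^ 2
            - (1 + R ^ 2) / R ^ 2 * ‖ψ x‖ ^ 2 * (‖x‖ ^ 2 * (1 + ‖x‖ ^ 2)⁻¹ ^ 2) := by ring
      have h7 : (1 + R ^ 2) / R ^ 2 * ‖ψ x‖ ^ 2 * (1 / ‖x‖ ^ 2)
          = (1 + R ^ 2) / R ^ 2 * (‖ψ x‖ ^ 2 / ‖x‖ ^ 2) := by ring
      linarith
    linarith
  · push Not at hx
    have hx2 : ‖x‖ ^ 2 ≤ R ^ 2 := by gcongr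
    have h1 : 1 ≤ 2 - ‖x‖ ^ 2 / R ^ 2 := by
      have : ‖x‖ ^ 2 / R ^ 2 ≤ 1 := (div_le_one hR2).2 hx2
      linarith
    have h2 : ‖ψ x‖ ^ 2 / (1 + ‖x‖ ^ 2)
        = (1 + ‖x‖ ^ 2) * (1 * (1 + ‖x‖ ^ 2)⁻¹ ^ 2 * ‖ψ x‖ ^ 2) := by field_simp
    have h3 : (1 + ‖x‖ ^ 2) * (1 * (1 + ‖x‖ ^ 2)⁻¹ ^ 2 * ‖ψ x‖ ^ 2) ≤
        (1 + R ^ 2) * ((2 - ‖x‖ ^ 2 / R ^ 2) * (1 + ‖x‖ ^ 2)⁻¹ ^ 2 * ‖ψ x‖ ^ 2) := by gcongr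
    linarith

/-- Non-integrality of the flux expressed through the holonomy. -/
lemma exp_flux_ne_one {s : ℝ} (hs : ∀ n : ℤ, (1 / (2 * π)) * s ≠ (n : ℝ)) :
    Complex.exp (-(Complex.I * s)) ≠ 1 := by
  rw [Ne, Complex.exp_eq_one_iff]
  rintro ⟨n, hn⟩
  apply hs (-n)
  have h1 : Complex.I * (-(s : ℂ)) = Complex.I * ((n * (2 * π) : ℝ) : ℂ) := by
    push_cast
    linear_combination hn
  have h2 : -s = n * (2 * π) := by exact_mod_cast mul_left_cancel₀ Complex.I_ne_zero h1
  have hpi := pi_pos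
  push_cast
  field_simp
  linarith

/-- The magnetic Hardy inequality with explicit constants. -/
lemma hardy_integral_le {B : EuclideanSpace ℝ (Fin 2) → ℝ} (hB : Continuous B)
    (hs : Complex.exp (-(Complex.I * (∫ x, B x : ℝ))) ≠ 1) {R : ℝ} (hR : 0 < R)
    (hBR : ∀ x, R ≤ ‖x‖ → B x = 0)
    {A : EuclideanSpace ℝ (Fin 2) → EuclideanSpace ℝ (Fin 2)} (hA : Differentiable ℝ A)
    (hcurl : ∀ x, fderiv ℝ (fun y => A y 1) x (EuclideanSpace.single 0 (1:ℝ))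
        - fderiv ℝ (fun y => A y 0) x (EuclideanSpace.single 1 (1:ℝ)) = B x)
    {ψ : EuclideanSpace ℝ (Fin 2) → ℂ} (hψ : ContDiff ℝ 1 ψ) (hc : HasCompactSupport ψ) :
    ∫ x, ‖ψ x‖ ^ 2 / (1 + ‖x‖ ^ 2) ≤
      ((1 + R ^ 2) * R ^ 2 + ((1 + R ^ 2) / R ^ 2 + 1) *
        (2 * π * (1 / ‖Complex.exp (-(Complex.I * (∫ x, B x : ℝ))) - 1‖ + 1)) ^ 2) *
      ∫ x, magEnergy2 A ψ x := by
  have hext := lintegral_exterior_le_magEnergy2 hB hs hBR hA hcurl hψ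
  set K := (2 * π * (1 / ‖Complex.exp (-(Complex.I * (∫ x, B x : ℝ))) - 1‖ + 1)) ^ 2
  have hψc := hψ.continuous
  have hE := integrable_magEnergy2 hA.continuous hψ hc
  have hE0 : 0 ≤ᵐ[volume] magEnergy2 A ψ := Filter.Eventually.of_forall (magEnergy2_nonneg A ψ)
  set O : EuclideanSpace ℝ (Fin 2) → ℝ := fun x => if R ≤ ‖x‖ then ‖ψ x‖ ^ 2 / ‖x‖ ^ 2 else 0
  have hO0 : 0 ≤ᵐ[volume] O := Filter.Eventually.of_forall fun x => by
    simp only [O, Pi.zero_apply]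
    positivity
  have hOm : AEStronglyMeasurable O volume :=
    (Measurable.ite (measurableSet_le measurable_const measurable_norm) (by fun_prop)
      (by fun_prop)).aestronglyMeasurable
  rw [← ofReal_integral_eq_lintegral_ofReal hE hE0, ← ENNReal.ofReal_mul (by positivity)] at hext
  have hOi : Integrable O :=
    ⟨hOm, (hasFiniteIntegral_iff_ofReal hO0).2 (hext.trans_lt ENNReal.ofReal_lt_top)⟩
  rw [← ofReal_integral_eq_lintegral_ofReal hOi hO0,
    ENNReal.ofReal_le_ofReal_iff (mul_nonneg (by positivity) (integral_nonneg_of_ae hE0))] at hext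
  have hD := fun j => integral_fderiv_eq_zero (contDiff_radialField hψ j)
    (hasCompactSupport_radialField hc j) (EuclideanSpace.single j 1)
  have hDi : Integrable fun x =>
      ∑ j, fderiv ℝ (radialField ψ j) x (EuclideanSpace.single j 1) :=
    integrable_finsetSum _ fun j _ => (hD j).1
  have hDz : ∫ x, ∑ j, fderiv ℝ (radialField ψ j) x (EuclideanSpace.single j 1) = 0 := by
    rw [integral_finsetSum _ fun j _ => (hD j).1]
    exact Finset.sum_eq_zero fun j _ => (hD j).2
  have hL : Integrable fun x => ‖ψ x‖ ^ 2 / (1 + ‖x‖ ^ 2) :=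
    (Continuous.div (by fun_prop) (by fun_prop) fun x => by positivity).integrable_of_hasCompactSupport
      (hc.mono fun x hx h => hx (by simp [h]))
  have hDE : Integrable fun x =>
      ∑ j, fderiv ℝ (radialField ψ j) x (EuclideanSpace.single j 1) + R ^ 2 * magEnergy2 A ψ x :=
    hDi.add (hE.const_mul (R ^ 2))
  have hmono := integral_mono hL ((hDE.const_mul (1 + R ^ 2)).add
    (hOi.const_mul ((1 + R ^ 2) / R ^ 2 + 1)))
    fun x => hardy_density_le hR A (hψ.differentiable (by norm_num)) x
  refine hmono.trans ?_
  simp only [Pi.add_apply]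
  rw [integral_add (hDE.const_mul (1 + R ^ 2)) (hOi.const_mul _), integral_const_mul,
    integral_const_mul, integral_add hDi (hE.const_mul _), integral_const_mul, hDz, zero_add]
  have := mul_le_mul_of_nonneg_left hext (show 0 ≤ (1 + R ^ 2) / R ^ 2 + 1 by positivity)
  linarith

theorem stmt1 (B : EuclideanSpace ℝ (Fin 2) → ℝ)
    (hBsmooth : ContDiff ℝ (⊤ : ℕ∞) B) (hBsupp : HasCompactSupport B)
    (hflux : ∀ n : ℤ, (1 / (2 * Real.pi)) * (∫ x, B x) ≠ (n : ℝ)) :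
    ∃ c > (0:ℝ), ∀ A : EuclideanSpace ℝ (Fin 2) → EuclideanSpace ℝ (Fin 2),
      ContDiff ℝ (⊤ : ℕ∞) A →
      (∀ x : EuclideanSpace ℝ (Fin 2),
        fderiv ℝ (fun y => A y 1) x (EuclideanSpace.single 0 (1:ℝ))
        - fderiv ℝ (fun y => A y 0) x (EuclideanSpace.single 1 (1:ℝ)) = B x) →
      ∀ ψ : EuclideanSpace ℝ (Fin 2) → ℂ, ContDiff ℝ (⊤ : ℕ∞) ψ → HasCompactSupport ψ →
      (∫ x, magEnergy2 A ψ x) ≥ c * ∫ x, ‖ψ x‖^2 / (1 + ‖x‖^2) := by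
  obtain ⟨R, hR, hsub⟩ := hBsupp.isBounded.subset_ball_lt 0 0
  have hBR : ∀ x, R ≤ ‖x‖ → B x = 0 := fun x hx =>
    image_eq_zero_of_notMem_tsupport fun h => by
      have := hsub h
      rw [mem_ball_zero_iff] at this
      linarith
  set K := (1 + R ^ 2) * R ^ 2 + ((1 + R ^ 2) / R ^ 2 + 1) *
    (2 * π * (1 / ‖Complex.exp (-(Complex.I * (∫ x, B x : ℝ))) - 1‖ + 1)) ^ 2
  have hKpos : 0 < K := by positivity
  refine ⟨K⁻¹, by positivity, fun A hA hcurl ψ hψ hc => ?_⟩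
  rw [ge_iff_le, inv_mul_le_iff₀ hKpos]
  exact hardy_integral_le hBsmooth.continuous (exp_flux_ne_one hflux) hR hBR
    (hA.differentiable (by simp)) hcurl (hψ.of_le (by exact_mod_cast le_top)) hc
end

section
/- Let r₀ > 0. For every smooth compactly supported function f : ℝ → ℂ which vanishes on a neighbourhood of r₀, one has ∫_{r₀}^∞ |f'(r)|² r dr ≥ (1/4) ∫_{r₀}^∞ |f(r)|² / (r² (log(r/r₀))²) · r dr. -/
open MeasureTheory Real Filter

/-- The logarithmic Hardy inequality on a compact interval `[a, b]` with `r₀ < a`, for functions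
vanishing at both endpoints. -/
theorem log_hardy_intervalIntegral {r₀ a b : ℝ} (hr₀ : 0 < r₀) (ha : r₀ < a) (hab : a ≤ b)
    {f : ℝ → ℂ} (hf : ContDiff ℝ 1 f) (hfa : f a = 0) (hfb : f b = 0) :
    (1 / 4 : ℝ) * ∫ r in a..b, ‖f r‖ ^ 2 / (r ^ 2 * (Real.log (r / r₀)) ^ 2) * r
      ≤ ∫ r in a..b, ‖deriv f r‖ ^ 2 * r := by
  have hpos : ∀ r ∈ Set.Icc a b, 0 < r := fun r hr => hr₀.trans (ha.trans_le hr.1)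
  have hlog : ∀ r ∈ Set.Icc a b, 0 < Real.log (r / r₀) := fun r hr =>
    Real.log_pos ((one_lt_div hr₀).2 (ha.trans_le hr.1))
  have hfc : Continuous f := hf.continuous
  have hf'c : Continuous (deriv f) := hf.continuous_deriv le_rfl
  have hLc : ContinuousOn (fun r => Real.log (r / r₀)) (Set.Icc a b) :=
    ContinuousOn.log (by fun_prop) fun r hr => (div_pos (hpos r hr) hr₀).ne'
  let g : ℝ → ℝ := fun r =>
    2 * inner ℝ (f r) (deriv f r) / Real.log (r / r₀) - ‖f r‖ ^ 2 / (r * Real.log (r / r₀) ^ 2)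
  let w : ℝ → ℝ := fun r => ‖f r‖ ^ 2 / (r ^ 2 * (Real.log (r / r₀)) ^ 2) * r
  have hgc : ContinuousOn g (Set.Icc a b) := by
    refine ContinuousOn.sub (ContinuousOn.div (by fun_prop) hLc fun r hr => (hlog r hr).ne')
      (ContinuousOn.div (by fun_prop) (continuousOn_id.mul (hLc.pow 2)) fun r hr => ?_)
    exact (mul_pos (hpos r hr) (pow_pos (hlog r hr) 2)).ne'
  have hwc : ContinuousOn w (Set.Icc a b) := by
    refine (ContinuousOn.div (by fun_prop) (((continuousOn_id (s := Set.Icc a b)).pow 2).mul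
      (hLc.pow 2)) fun r hr => ?_).mul continuousOn_id
    exact (mul_pos (pow_pos (hpos r hr) 2) (pow_pos (hlog r hr) 2)).ne'
  have hgi := hgc.intervalIntegrable_of_Icc (μ := volume) hab
  have hwi := hwc.intervalIntegrable_of_Icc (μ := volume) hab
  have hg0 : ∫ r in a..b, g r = 0 := by
    rw [intervalIntegral.integral_eq_sub_of_hasDerivAt
      (f := fun r => ‖f r‖ ^ 2 / Real.log (r / r₀)) _ hgi]
    · simp [hfa, hfb]
    · intro r hr
      rw [Set.uIcc_of_le hab] at hr
      have hr0 := (hpos r hr).ne'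
      have hL := (hlog r hr).ne'
      have h1 : HasDerivAt (fun r => ‖f r‖ ^ 2) (2 * inner ℝ (f r) (deriv f r)) r :=
        ((hf.differentiable one_ne_zero) r).hasDerivAt.norm_sq
      have h2 : HasDerivAt (fun r => Real.log (r / r₀)) (1 / r₀ / (r / r₀)) r :=
        ((hasDerivAt_id r).div_const r₀).log (div_ne_zero hr0 hr₀.ne')
      refine (h1.div h2 hL).congr_deriv ?_
      simp only [g]
      field_simp
  have hmono : ∫ r in a..b, (1 / 2 * g r + 1 / 4 * w r) ≤ ∫ r in a..b, ‖deriv f r‖ ^ 2 * r := by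
    refine intervalIntegral.integral_mono_on hab ((hgi.const_mul _).add (hwi.const_mul _))
      (Continuous.intervalIntegrable (by fun_prop) _ _) fun r hr => ?_
    have hr0 := hpos r hr
    have hL := hlog r hr
    have hsq : 0 ≤ r * ‖deriv f r - (1 / (2 * r * Real.log (r / r₀))) • f r‖ ^ 2 := by positivity
    rw [norm_sub_sq_real, inner_smul_right, norm_smul, real_inner_comm, mul_pow, Real.norm_eq_abs,
      sq_abs] at hsq
    refine sub_nonneg.1 (hsq.trans_eq ?_)
    simp only [g, w]
    field_simp
    ring
  rw [intervalIntegral.integral_add (hgi.const_mul _) (hwi.const_mul _),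
    intervalIntegral.integral_const_mul, intervalIntegral.integral_const_mul, hg0] at hmono
  simpa using hmono

theorem stmt3 (r₀ : ℝ) (hr₀ : 0 < r₀)
    (f : ℝ → ℂ) (hf : ContDiff ℝ (⊤ : ℕ∞) f) (hsupp : HasCompactSupport f)
    (hvan : ∀ᶠ r in nhds r₀, f r = 0) :
    (∫ r in Set.Ioi r₀, ‖deriv f r‖^2 * r)
    ≥ (1/4 : ℝ) * ∫ r in Set.Ioi r₀, ‖f r‖^2 / (r^2 * (Real.log (r / r₀))^2) * r := by
  obtain ⟨ε, hε, hball⟩ := Metric.eventually_nhds_iff_ball.1 hvan.eventually_nhds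
  obtain ⟨R, hR⟩ := hsupp.isCompact.isBounded.subset_closedBall 0
  set a := r₀ + ε / 2 with ha
  set b := max a (R + 1) with hb
  have hab : a ≤ b := le_max_left _ _
  have hra : r₀ < a := by linarith
  have hzero : ∀ r ∈ Set.Ioi r₀ \ Set.Ioc a b, f r = 0 ∧ deriv f r = 0 := by
    rintro r ⟨hr, hr'⟩
    rcases le_or_gt r a with h | h
    · have hev : f =ᶠ[nhds r] fun _ => 0 := hball r (by
        rw [Metric.mem_ball, Real.dist_eq, abs_lt]
        constructor <;> linarith [Set.mem_Ioi.1 hr])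
      exact ⟨hev.eq_of_nhds, by simp [hev.deriv_eq]⟩
    · have hbr : b < r := not_le.1 fun h' => hr' ⟨h, h'⟩
      have hnot : r ∉ tsupport f := fun h' => by
        have h1 := hR h'
        rw [Metric.mem_closedBall, dist_zero_right, Real.norm_eq_abs] at h1
        linarith [le_abs_self r, le_max_right a (R + 1)]
      exact ⟨image_eq_zero_of_notMem_tsupport hnot,
        Function.notMem_support.1 fun h' => hnot (support_deriv_subset h')⟩
  have hsub : Set.Ioc a b ⊆ Set.Ioi r₀ := fun r hr => hra.trans hr.1
  have hfa : f a = 0 := (hzero a ⟨hra, fun h => lt_irrefl _ h.1⟩).1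
  have hfb : f b = 0 := by
    refine image_eq_zero_of_notMem_tsupport fun h' => ?_
    have h1 := hR h'
    rw [Metric.mem_closedBall, dist_zero_right, Real.norm_eq_abs] at h1
    linarith [le_abs_self b, le_max_right a (R + 1)]
  rw [ge_iff_le,
    setIntegral_eq_of_subset_of_forall_sdiff_eq_zero measurableSet_Ioi hsub
      (fun r hr => by simp [(hzero r hr).1]),
    setIntegral_eq_of_subset_of_forall_sdiff_eq_zero (f := fun r => ‖deriv f r‖ ^ 2 * r)
      measurableSet_Ioi hsub (fun r hr => by simp [(hzero r hr).2]),
    ← intervalIntegral.integral_of_le hab, ← intervalIntegral.integral_of_le hab]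
  exact log_hardy_intervalIntegral hr₀ hra hab (hf.of_le (by exact_mod_cast le_top)) hfa hfb
end

section
/- Let d ≥ 2 and let A : ℝ^d → ℝ^d be smooth. For s ≥ 0 set A_s(y) := e^{s/2} A(e^{s/2} y). Then for every s ≥ 0 and every ψ ∈ C_c^∞(ℝ^d, ℂ): ∫_{ℝ^d} |∇ψ(y) − iA_s(y)ψ(y)|² dy − ((d−2)/2)² ∫_{ℝ^d} |ψ(y)|²/|y|² dy + (1/16) ∫_{ℝ^d} |y|² |ψ(y)|² dy ≥ (1/2) ∫_{ℝ^d} |ψ(y)|² dy. -/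
open MeasureTheory Real

/-- The integral of a directional derivative of a compactly supported `C¹` function vanishes. -/
theorem integral_fderiv_apply_eq_zero_of_hasCompactSupport {E : Type*} [NormedAddCommGroup E]
    [NormedSpace ℝ E] [FiniteDimensional ℝ E] [MeasurableSpace E] [BorelSpace E]
    (μ : Measure E) [μ.IsAddHaarMeasure] {f : E → ℝ} (hf : ContDiff ℝ 1 f)
    (hsupp : HasCompactSupport f) (v : E) : ∫ y, fderiv ℝ f y v ∂μ = 0 := by
  have hint : Integrable (fun y => fderiv ℝ f y v) μ :=
    ((hf.continuous_fderiv one_ne_zero).clm_apply continuous_const).integrable_of_hasCompactSupport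
      (hsupp.fderiv_apply (𝕜 := ℝ) v)
  have key := integral_mul_fderiv_eq_neg_fderiv_mul_of_integrable (μ := μ) (𝕜 := ℝ)
    (f := fun _ => (1 : ℝ)) (g := f) (v := v) (by simp) (by simpa using hint)
    (by simpa using hf.continuous.integrable_of_hasCompactSupport hsupp)
    (fun x _ => differentiableAt_const _)
    (fun x _ => hf.differentiable one_ne_zero x)
  simpa using key

/-- Completing the square for a magnetic derivative `a - iαz` and a real multiplier `t`. -/
theorem neg_sq_mul_norm_sq_le_magnetic (a z : ℂ) (α t : ℝ) :
    -(t ^ 2 * ‖z‖ ^ 2) ≤ ‖a - Complex.I * (α : ℂ) * z‖ ^ 2 + t * (2 * inner ℝ z a) := by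
  have h : 0 ≤ ‖a - Complex.I * (α : ℂ) * z + t * z‖ ^ 2 := by positivity
  simp only [Complex.sq_norm, Complex.normSq_apply, Complex.inner] at h ⊢
  simp at h ⊢
  nlinarith

section RegularizedField

variable {d : ℕ}

theorem contDiff_regularized_field {c ε : ℝ} (hε : 0 < ε)
    {ψ : EuclideanSpace ℝ (Fin d) → ℂ} (hψ : ContDiff ℝ 1 ψ) (j : Fin d) :
    ContDiff ℝ 1 fun y : EuclideanSpace ℝ (Fin d) =>
      y j * (c * (‖y‖ ^ 2 + ε)⁻¹ + 1 / 4) * ‖ψ y‖ ^ 2 := by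
  have h1 : ContDiff ℝ 1 fun y : EuclideanSpace ℝ (Fin d) => y j :=
    (EuclideanSpace.proj (𝕜 := ℝ) j).contDiff
  have h2 : ContDiff ℝ 1 fun y : EuclideanSpace ℝ (Fin d) => (‖y‖ ^ 2 + ε)⁻¹ :=
    ((contDiff_id.norm_sq ℝ).add contDiff_const).inv fun y => by positivity
  exact (h1.mul ((contDiff_const.mul h2).add contDiff_const)).mul (hψ.norm_sq ℝ)

theorem fderiv_regularized_field_apply_single {c ε : ℝ} (hε : 0 < ε)
    {ψ : EuclideanSpace ℝ (Fin d) → ℂ} (hψ : ContDiff ℝ 1 ψ) (j : Fin d)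
    (y : EuclideanSpace ℝ (Fin d)) :
    fderiv ℝ (fun y : EuclideanSpace ℝ (Fin d) =>
        y j * (c * (‖y‖ ^ 2 + ε)⁻¹ + 1 / 4) * ‖ψ y‖ ^ 2) y (EuclideanSpace.single j 1)
      = (c * (‖y‖ ^ 2 + ε)⁻¹ + 1 / 4) * ‖ψ y‖ ^ 2
        - 2 * c * (y j) ^ 2 * (‖y‖ ^ 2 + ε)⁻¹ ^ 2 * ‖ψ y‖ ^ 2
        + y j * (c * (‖y‖ ^ 2 + ε)⁻¹ + 1 / 4)
          * (2 * inner ℝ (ψ y) (fderiv ℝ ψ y (EuclideanSpace.single j 1))) := by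
  have hne : ‖y‖ ^ 2 + ε ≠ 0 := by positivity
  have h1 : HasFDerivAt (fun y : EuclideanSpace ℝ (Fin d) => y j)
      (EuclideanSpace.proj (𝕜 := ℝ) j) y := (EuclideanSpace.proj (𝕜 := ℝ) j).hasFDerivAt
  have h2 := (((hasDerivAt_inv hne).comp_hasFDerivAt y
    ((hasFDerivAt_id y).norm_sq.add_const ε)).const_mul c).add_const (1 / 4 : ℝ)
  have h3 := (hψ.differentiable one_ne_zero y).hasFDerivAt.norm_sq
  have h := (h1.mul h2).mul h3
  have h' := h.fderiv
  refine (congrArg (fun L => L (EuclideanSpace.single j (1 : ℝ))) h').trans ?_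
  simp [EuclideanSpace.inner_single_right]
  field_simp
  ring

theorem ground_state_potential_le {c ε r : ℝ} (hc : 0 ≤ c) (hε : 0 < ε) :
    c ^ 2 * (r ^ 2 + ε)⁻¹ + 1 / 2 - r ^ 2 / 16 ≤
      (2 * c + 2) * (c * (r ^ 2 + ε)⁻¹ + 1 / 4) - 2 * c * r ^ 2 * (r ^ 2 + ε)⁻¹ ^ 2
        - r ^ 2 * (c * (r ^ 2 + ε)⁻¹ + 1 / 4) ^ 2 := by
  have hpos : 0 < r ^ 2 + ε := by positivity
  set q := (r ^ 2 + ε)⁻¹ with hq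
  have hqpos : 0 < q := inv_pos.mpr hpos
  have hr : r ^ 2 * q = 1 - ε * q := by
    have : (r ^ 2 + ε) * q = 1 := mul_inv_cancel₀ hpos.ne'
    linarith
  have hrem : 0 ≤ 2 * c * ε * q ^ 2 + c ^ 2 * ε * q ^ 2 + c * ε * q / 2 := by positivity
  linear_combination hrem + (2 * c * q + c ^ 2 * q + c / 2) * hr

/-- Magnetic Hardy inequality for the harmonic oscillator, with the Hardy weight regularized. -/
theorem regularized_magnetic_hardy (hd : 2 ≤ d) {c : ℝ} (hcd : (d : ℝ) = 2 * c + 2)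
    {B : Fin d → EuclideanSpace ℝ (Fin d) → ℝ} (hB : ∀ j, Continuous (B j))
    {ψ : EuclideanSpace ℝ (Fin d) → ℂ} (hψ : ContDiff ℝ 1 ψ) (hsupp : HasCompactSupport ψ)
    {ε : ℝ} (hε : 0 < ε) :
    c ^ 2 * (∫ y, (‖y‖ ^ 2 + ε)⁻¹ * ‖ψ y‖ ^ 2) + 1 / 2 * (∫ y, ‖ψ y‖ ^ 2)
        - 1 / 16 * (∫ y, ‖y‖ ^ 2 * ‖ψ y‖ ^ 2) ≤
      ∫ y, ∑ j, ‖fderiv ℝ ψ y (EuclideanSpace.single j 1)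
        - Complex.I * (B j y : ℂ) * ψ y‖ ^ 2 := by
  have hc : 0 ≤ c := by
    have : (2 : ℝ) ≤ d := by exact_mod_cast hd
    linarith
  have hψc := hψ.continuous
  have hg : HasCompactSupport fun y => ‖ψ y‖ ^ 2 :=
    hsupp.comp_left (g := fun z : ℂ => ‖z‖ ^ 2) (by simp)
  have i1 : Integrable fun y => (‖y‖ ^ 2 + ε)⁻¹ * ‖ψ y‖ ^ 2 := by
    refine Continuous.integrable_of_hasCompactSupport ?_ hg.mul_left
    exact ((by fun_prop : Continuous fun y : EuclideanSpace ℝ (Fin d) => ‖y‖ ^ 2 + ε).inv₀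
      fun y => by positivity).mul (by fun_prop)
  have i2 : Integrable fun y => ‖ψ y‖ ^ 2 :=
    Continuous.integrable_of_hasCompactSupport (by fun_prop) hg
  have i3 : Integrable fun y => ‖y‖ ^ 2 * ‖ψ y‖ ^ 2 :=
    Continuous.integrable_of_hasCompactSupport (by fun_prop) hg.mul_left
  have iP : ∀ j, Integrable fun y => ‖fderiv ℝ ψ y (EuclideanSpace.single j 1)
      - Complex.I * (B j y : ℂ) * ψ y‖ ^ 2 := by
    intro j
    have hBj := hB j
    have hD : Continuous fun y => fderiv ℝ ψ y (EuclideanSpace.single j 1) :=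
      (hψ.continuous_fderiv one_ne_zero).clm_apply continuous_const
    refine Continuous.integrable_of_hasCompactSupport (by fun_prop) ?_
    exact ((hsupp.fderiv_apply (𝕜 := ℝ) _).sub hsupp.mul_left).comp_left
      (g := fun z : ℂ => ‖z‖ ^ 2) (by simp)
  set W : Fin d → EuclideanSpace ℝ (Fin d) → ℝ := fun j y =>
    y j * (c * (‖y‖ ^ 2 + ε)⁻¹ + 1 / 4) * ‖ψ y‖ ^ 2 with hW
  have hW1 : ∀ j, ContDiff ℝ 1 (W j) := contDiff_regularized_field hε hψ
  have hWs : ∀ j, HasCompactSupport (W j) := fun j => hg.mul_left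
  have iQ : ∀ j, Integrable fun y => fderiv ℝ (W j) y (EuclideanSpace.single j 1) := fun j =>
    (((hW1 j).continuous_fderiv one_ne_zero).clm_apply
      continuous_const).integrable_of_hasCompactSupport ((hWs j).fderiv_apply (𝕜 := ℝ) _)
  have hQ : ∫ y, ∑ j, fderiv ℝ (W j) y (EuclideanSpace.single j 1) = 0 := by
    rw [integral_finsetSum _ fun j _ => iQ j]
    exact Finset.sum_eq_zero fun j _ =>
      integral_fderiv_apply_eq_zero_of_hasCompactSupport volume (hW1 j) (hWs j) _
  have iP' := integrable_finsetSum Finset.univ fun j _ => iP j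
  have iQ' := integrable_finsetSum Finset.univ fun j _ => iQ j
  have i12 : Integrable fun y =>
      c ^ 2 * ((‖y‖ ^ 2 + ε)⁻¹ * ‖ψ y‖ ^ 2) + 1 / 2 * ‖ψ y‖ ^ 2 :=
    (i1.const_mul _).add (i2.const_mul _)
  calc _ = ∫ y, (c ^ 2 * ((‖y‖ ^ 2 + ε)⁻¹ * ‖ψ y‖ ^ 2) + 1 / 2 * ‖ψ y‖ ^ 2
          - 1 / 16 * (‖y‖ ^ 2 * ‖ψ y‖ ^ 2)) := by
        rw [integral_sub i12 (i3.const_mul _),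
          integral_add (i1.const_mul _) (i2.const_mul _), integral_const_mul,
          integral_const_mul, integral_const_mul]
    _ ≤ ∫ y, ((∑ j, ‖fderiv ℝ ψ y (EuclideanSpace.single j 1)
          - Complex.I * (B j y : ℂ) * ψ y‖ ^ 2)
          + ∑ j, fderiv ℝ (W j) y (EuclideanSpace.single j 1)) := by
        refine integral_mono (i12.sub (i3.const_mul _))
          (iP'.add iQ') fun y => ?_
        dsimp only
        set h := c * (‖y‖ ^ 2 + ε)⁻¹ + 1 / 4 with hh
        have hsum : ∑ j, (h * ‖ψ y‖ ^ 2 - 2 * c * (y j) ^ 2 * (‖y‖ ^ 2 + ε)⁻¹ ^ 2 * ‖ψ y‖ ^ 2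
            - (y j * h) ^ 2 * ‖ψ y‖ ^ 2) =
            ((2 * c + 2) * h - 2 * c * ‖y‖ ^ 2 * (‖y‖ ^ 2 + ε)⁻¹ ^ 2
              - ‖y‖ ^ 2 * h ^ 2) * ‖ψ y‖ ^ 2 := by
          have hy := EuclideanSpace.real_norm_sq_eq y
          have hterm : ∀ j, h * ‖ψ y‖ ^ 2 - 2 * c * (y j) ^ 2 * (‖y‖ ^ 2 + ε)⁻¹ ^ 2 * ‖ψ y‖ ^ 2
              - (y j * h) ^ 2 * ‖ψ y‖ ^ 2 = h * ‖ψ y‖ ^ 2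
              - (y j) ^ 2 * ((2 * c * (‖y‖ ^ 2 + ε)⁻¹ ^ 2 + h ^ 2) * ‖ψ y‖ ^ 2) :=
            fun j => by ring
          rw [Finset.sum_congr rfl fun j _ => hterm j, Finset.sum_sub_distrib,
            ← Finset.sum_mul _ (fun j => (y j) ^ 2), ← hy, Finset.sum_const, Finset.card_univ, Fintype.card_fin, nsmul_eq_mul, hcd]
          ring
        have hpot := mul_le_mul_of_nonneg_right (ground_state_potential_le (r := ‖y‖) hc hε)
          (sq_nonneg ‖ψ y‖)
        rw [← hh, ← hsum] at hpot
        rw [← Finset.sum_add_distrib]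
        refine le_trans (le_trans (le_of_eq (by ring)) hpot) (Finset.sum_le_sum fun j _ => ?_)
        have hsq := neg_sq_mul_norm_sq_le_magnetic
          (fderiv ℝ ψ y (EuclideanSpace.single j 1)) (ψ y) (B j y) (y j * h)
        rw [hW, fderiv_regularized_field_apply_single hε hψ j y, ← hh]
        linarith
    _ = _ := by rw [integral_add iP' iQ', hQ, add_zero]

end RegularizedField

/-- If the integrals of the regularized Hardy weight are bounded, so is the Hardy integral. -/
theorem mul_integral_div_norm_sq_le {E : Type*} [NormedAddCommGroup E]
    [MeasurableSpace E] [BorelSpace E] (μ : Measure E) [NullSingletonClass μ]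
    {g : E → ℝ} (hg : AEStronglyMeasurable g μ) (hg0 : ∀ y, 0 ≤ g y) {a K : ℝ} (ha : 0 ≤ a)
    (hK : ∀ ε : ℝ, 0 < ε → a * (∫ y, (‖y‖ ^ 2 + ε)⁻¹ * g y ∂μ) ≤ K) :
    a * (∫ y, g y / ‖y‖ ^ 2 ∂μ) ≤ K := by
  by_cases hint : Integrable (fun y => g y / ‖y‖ ^ 2) μ
  · have hne : ∀ᵐ y ∂μ, y ≠ 0 := by simp [ae_iff]
    have hlim : Filter.Tendsto (fun ε : ℝ => ∫ y, (‖y‖ ^ 2 + ε)⁻¹ * g y ∂μ)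
        (nhdsWithin 0 (Set.Ioi 0)) (nhds (∫ y, g y / ‖y‖ ^ 2 ∂μ)) := by
      refine tendsto_integral_filter_of_dominated_convergence (fun y => g y / ‖y‖ ^ 2)
        ?_ ?_ hint ?_
      · refine .of_forall fun ε => AEStronglyMeasurable.mul ?_ hg
        exact (by fun_prop : Measurable fun y : E => (‖y‖ ^ 2 + ε)⁻¹).aestronglyMeasurable
      · filter_upwards [self_mem_nhdsWithin] with ε (hε : 0 < ε)
        filter_upwards [hne] with y hy
        have hy' : 0 < ‖y‖ ^ 2 := by positivity
        rw [Real.norm_of_nonneg (mul_nonneg (by positivity) (hg0 y)), div_eq_inv_mul]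
        exact mul_le_mul_of_nonneg_right (inv_anti₀ hy' (by linarith)) (hg0 y)
      · filter_upwards [hne] with y hy
        have hy' : ‖y‖ ^ 2 + 0 ≠ 0 := by positivity
        have hc : ContinuousAt (fun ε : ℝ => (‖y‖ ^ 2 + ε)⁻¹ * g y) 0 :=
          ((continuousAt_const.add continuousAt_id).inv₀ hy').mul continuousAt_const
        have ht := hc.tendsto.mono_left (nhdsWithin_le_nhds (s := Set.Ioi (0 : ℝ)))
        simpa [div_eq_inv_mul] using ht
    refine le_of_tendsto (hlim.const_mul a) ?_
    filter_upwards [self_mem_nhdsWithin] with ε hε using hK ε hε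
  · rw [integral_undef hint, mul_zero]
    refine le_trans (mul_nonneg ha (integral_nonneg fun y => ?_)) (hK 1 one_pos)
    exact mul_nonneg (by positivity) (hg0 y)

theorem stmt13 (d : ℕ) (hd : 2 ≤ d)
    (A : EuclideanSpace ℝ (Fin d) → EuclideanSpace ℝ (Fin d)) (hA : ContDiff ℝ (⊤ : ℕ∞) A)
    (s : ℝ) (hs : 0 ≤ s)
    (ψ : EuclideanSpace ℝ (Fin d) → ℂ) (hψ : ContDiff ℝ (⊤ : ℕ∞) ψ) (hsupp : HasCompactSupport ψ) :
    (∫ y, ∑ j, ‖fderiv ℝ ψ y (EuclideanSpace.single j (1:ℝ))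
        - Complex.I * (Real.exp (s/2) * A (Real.exp (s/2) • y) j : ℝ) * ψ y‖ ^ 2)
      - ((d - 2 : ℝ)/2)^2 * (∫ y, ‖ψ y‖^2 / ‖y‖^2)
      + (1/16 : ℝ) * (∫ y, ‖y‖^2 * ‖ψ y‖^2)
    ≥ (1/2 : ℝ) * ∫ y, ‖ψ y‖^2 := by
  have : Nonempty (Fin d) := ⟨⟨0, by omega⟩⟩
  have hAc := hA.continuous
  have hψc := hψ.continuous
  have hψ1 : ContDiff ℝ 1 ψ := hψ.of_le (by exact_mod_cast le_top)
  have hB : ∀ j, Continuous fun y => Real.exp (s / 2) * A (Real.exp (s / 2) • y) j := fun j =>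
    continuous_const.mul ((EuclideanSpace.proj (𝕜 := ℝ) j).continuous.comp
      (hAc.comp (continuous_const_smul _)))
  have hreg := fun (ε : ℝ) (hε : 0 < ε) => regularized_magnetic_hardy hd
    (c := (d - 2 : ℝ) / 2) (by ring) hB hψ1 hsupp hε
  have hlim := mul_integral_div_norm_sq_le (volume : Measure (EuclideanSpace ℝ (Fin d)))
    (g := fun y => ‖ψ y‖ ^ 2) (by fun_prop) (fun y => by positivity)
    (sq_nonneg ((d - 2 : ℝ) / 2)) fun ε hε =>
      le_sub_iff_add_le.mpr (sub_le_iff_le_add.mp (hreg ε hε))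
  dsimp only at hlim
  linarith
end
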